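/- Let f: ℝ → ℝ satisfy hypothesis (H). Define Δ = {(t,ρ) ∈ (0,∞) × (−π,π) : −r_t < ρ < r_t} and F(t,ρ) = (U_t(ρ), U_t'(ρ)). Then F is a bijection from Δ onto (0,∞) × ℝ (and indeed a C¹ diffeomorphism). -/

import Mathlib

open Real Set

/-- `U` is an even `C²` solution of `U'' + (cot ρ)·U' + f(U) = 0` on `(-π, π)`. -/
def IsEvenSol (f U : ℝ → ℝ) : Prop :=
  (∀ ρ ∈ Set.Ioo (-Real.pi) Real.pi, U (-ρ) = U ρ) ∧
  ContDiffOn ℝ 2 U (Set.Ioo (-Real.pi) Real.pi) ∧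
  ∀ ρ ∈ Set.Ioo (-Real.pi) Real.pi, ρ ≠ 0 →
    deriv (deriv U) ρ + (Real.cos ρ / Real.sin ρ) * deriv U ρ + f (U ρ) = 0

section Helpers
open Filter Topology

/-- The standing hypotheses. -/
structure Ctx (f : ℝ → ℝ) (U : ℝ → ℝ → ℝ) (r : ℝ → ℝ) : Prop where
  hf : ContDiff ℝ 1 f
  hH : ∀ x > (0:ℝ), 0 < f x ∧ x * deriv f x ≤ f x
  hU : ∀ t > (0:ℝ), IsEvenSol f (U t) ∧ U t 0 = t ∧
      r t ∈ Set.Ioo 0 Real.pi ∧ U t (r t) = 0 ∧ ∀ ρ ∈ Set.Ioo 0 (r t), U t ρ ≠ 0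

/-- Energy estimate. -/
lemma energy {a b κ A B : ℝ} (hκ : 0 ≤ κ) (hA : 0 ≤ A) (y z c g : ℝ → ℝ)
    (hab : a ≤ b)
    (hyc : ContinuousOn y (Icc a b)) (hzc : ContinuousOn z (Icc a b))
    (hy : ∀ x ∈ Ioo a b, HasDerivAt y (z x) x)
    (hz : ∀ x ∈ Ioo a b, HasDerivAt z (-(c x) * z x + g x) x)
    (hc : ∀ x ∈ Ioo a b, -κ ≤ c x)
    (hg : ∀ x ∈ Ioo a b, |g x| ≤ A * |y x| + B) :
    y b ^ 2 + z b ^ 2 ≤ Real.exp ((2 * κ + A + 2) * (b - a)) * (y a ^ 2 + z a ^ 2 + B ^ 2) := by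
  set C := 2 * κ + A + 2 with hC
  set E : ℝ → ℝ := fun x => (y x ^ 2 + z x ^ 2 + B ^ 2) * Real.exp (-C * x) with hE
  have hanti : AntitoneOn E (Icc a b) := by
    apply antitoneOn_of_hasDerivWithinAt_nonpos (convex_Icc a b) (f' := fun x =>
      (2 * y x * z x + 2 * z x * (-(c x) * z x + g x)) * Real.exp (-C * x) +
        (y x ^ 2 + z x ^ 2 + B ^ 2) * (Real.exp (-C * x) * (-C)))
    · simp only [hE]
      apply ContinuousOn.mul
      · exact ((hyc.pow 2).add (hzc.pow 2)).add continuousOn_const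
      · fun_prop
    · intro x hx
      rw [interior_Icc] at hx
      apply HasDerivAt.hasDerivWithinAt
      have h1 := (((hy x hx).pow 2).add ((hz x hx).pow 2)).add_const (B ^ 2)
      have h2 : HasDerivAt (fun x => Real.exp (-C * x)) (Real.exp (-C * x) * (-C)) x := by
        have := ((hasDerivAt_id x).const_mul (-C)).exp
        simpa using this
      have := h1.mul h2
      refine HasDerivAt.congr_deriv this ?_
      simp
    · intro x hx
      rw [interior_Icc] at hx
      have he : 0 < Real.exp (-C * x) := Real.exp_pos _
      have key : 2 * y x * z x + 2 * z x * (-(c x) * z x + g x) ≤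
          C * (y x ^ 2 + z x ^ 2 + B ^ 2) := by
        have h1 := hc x hx
        have h2 := hg x hx
        have h3 : 2 * z x * g x ≤ 2 * |z x| * (A * |y x| + B) := by
          calc 2 * z x * g x ≤ |2 * z x * g x| := le_abs_self _
            _ = 2 * |z x| * |g x| := by rw [abs_mul, abs_mul]; simp
            _ ≤ _ := by gcongr
        have h4 : 2 * |z x| * (A * |y x| + B) ≤ A * (y x ^ 2 + z x ^ 2) + z x ^ 2 + B ^ 2 := by
          have e1 : |z x| ^ 2 = z x ^ 2 := sq_abs _
          have e2 : |y x| ^ 2 = y x ^ 2 := sq_abs _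
          nlinarith [mul_nonneg hA (sq_nonneg (|z x| - |y x|)), sq_nonneg (|z x| - B)]
        have h5 : 2 * y x * z x ≤ y x ^ 2 + z x ^ 2 := by nlinarith [sq_nonneg (y x - z x)]
        have h6 : 2 * z x * (-(c x) * z x) ≤ 2 * κ * z x ^ 2 := by
          nlinarith [mul_nonneg (by linarith : 0 ≤ c x + κ) (sq_nonneg (z x))]
        rw [hC]
        nlinarith [mul_nonneg hκ (sq_nonneg (y x)), mul_nonneg hκ (sq_nonneg B),
          mul_nonneg hA (sq_nonneg B), sq_nonneg (y x), sq_nonneg B]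
      nlinarith
  have := hanti (left_mem_Icc.2 hab) (right_mem_Icc.2 hab) hab
  simp only [hE] at this
  have e1 : Real.exp (C * (b - a)) = Real.exp (-C * a) * Real.exp (C * b) := by
    rw [← Real.exp_add]; ring_nf
  have e2 : Real.exp (-C * b) * Real.exp (C * b) = 1 := by
    rw [← Real.exp_add]; simp
  calc y b ^ 2 + z b ^ 2 ≤ y b ^ 2 + z b ^ 2 + B ^ 2 := by nlinarith [sq_nonneg B]
    _ = (y b ^ 2 + z b ^ 2 + B ^ 2) * Real.exp (-C * b) * Real.exp (C * b) := by
        rw [mul_assoc, e2, mul_one]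
    _ ≤ (y a ^ 2 + z a ^ 2 + B ^ 2) * Real.exp (-C * a) * Real.exp (C * b) := by gcongr
    _ = _ := by rw [e1]; ring

namespace Ctx
variable {f : ℝ → ℝ} {U : ℝ → ℝ → ℝ} {r : ℝ → ℝ}

lemma contDiffAt (c : Ctx f U r) {t ρ : ℝ} (ht : 0 < t) (hρ : ρ ∈ Ioo (-π) π) :
    ContDiffAt ℝ 2 (U t) ρ :=
  (c.hU t ht).1.2.1.contDiffAt (isOpen_Ioo.mem_nhds hρ)

lemma hd (c : Ctx f U r) {t ρ : ℝ} (ht : 0 < t) (hρ : ρ ∈ Ioo (-π) π) :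
    HasDerivAt (U t) (deriv (U t) ρ) ρ :=
  ((c.contDiffAt ht hρ).differentiableAt (by norm_num)).hasDerivAt

lemma contDiffOn_deriv (c : Ctx f U r) {t : ℝ} (ht : 0 < t) :
    ContDiffOn ℝ 1 (deriv (U t)) (Ioo (-π) π) :=
  (c.hU t ht).1.2.1.deriv_of_isOpen isOpen_Ioo (by norm_num)

lemma hd2 (c : Ctx f U r) {t ρ : ℝ} (ht : 0 < t) (hρ : ρ ∈ Ioo (-π) π) :
    HasDerivAt (deriv (U t)) (deriv (deriv (U t)) ρ) ρ :=
  (((c.contDiffOn_deriv ht).contDiffAt (isOpen_Ioo.mem_nhds hρ)).differentiableAt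
    (by norm_num)).hasDerivAt

lemma hd2' (c : Ctx f U r) {t ρ : ℝ} (ht : 0 < t) (hρ : ρ ∈ Ioo 0 π) :
    HasDerivAt (deriv (U t)) (-(cos ρ / sin ρ) * deriv (U t) ρ + -f (U t ρ)) ρ := by
  have hρ' : ρ ∈ Ioo (-π) π := ⟨by linarith [hρ.1, pi_pos], hρ.2⟩
  have := c.hd2 ht hρ'
  have h2 := (c.hU t ht).1.2.2 ρ hρ' hρ.1.ne'
  convert this using 1
  linarith

lemma V_odd (c : Ctx f U r) {t ρ : ℝ} (ht : 0 < t) (hρ : ρ ∈ Ioo (-π) π) :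
    deriv (U t) (-ρ) = -deriv (U t) ρ := by
  have hρ' : -ρ ∈ Ioo (-π) π := ⟨by linarith [hρ.2], by linarith [hρ.1]⟩
  have h1 := c.hd ht hρ
  have h2 : HasDerivAt (fun x => U t (-x)) (deriv (U t) (-ρ) * (-1)) ρ :=
    HasDerivAt.comp ρ (c.hd ht hρ') (hasDerivAt_neg ρ)
  have h3 : (fun x => U t (-x)) =ᶠ[𝓝 ρ] U t := by
    filter_upwards [isOpen_Ioo.mem_nhds hρ] with x hx using (c.hU t ht).1.1 x hx
  have := (h1.congr_of_eventuallyEq h3).unique h2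
  linarith

lemma V_zero (c : Ctx f U r) {t : ℝ} (ht : 0 < t) : deriv (U t) 0 = 0 := by
  have := c.V_odd ht (ρ := 0) ⟨by linarith [pi_pos], pi_pos⟩
  simp at this
  linarith

lemma rpos (c : Ctx f U r) {t : ℝ} (ht : 0 < t) : 0 < r t := (c.hU t ht).2.2.1.1
lemma rlt (c : Ctx f U r) {t : ℝ} (ht : 0 < t) : r t < π := (c.hU t ht).2.2.1.2
lemma U_zero (c : Ctx f U r) {t : ℝ} (ht : 0 < t) : U t 0 = t := (c.hU t ht).2.1

lemma contU (c : Ctx f U r) {t R : ℝ} (ht : 0 < t) (hR : R < π) :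
    ContinuousOn (U t) (Icc 0 R) := fun x hx =>
  (c.hd ht ⟨by linarith [hx.1, pi_pos], by linarith [hx.2]⟩).continuousAt.continuousWithinAt

lemma contV (c : Ctx f U r) {t R : ℝ} (ht : 0 < t) (hR : R < π) :
    ContinuousOn (deriv (U t)) (Icc 0 R) := fun x hx =>
  (c.hd2 ht ⟨by linarith [hx.1, pi_pos], by linarith [hx.2]⟩).continuousAt.continuousWithinAt

lemma U_pos (c : Ctx f U r) {t ρ : ℝ} (ht : 0 < t) (hρ : ρ ∈ Ico 0 (r t)) : 0 < U t ρ := by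
  by_contra h
  push Not at h
  have hc : ContinuousOn (U t) (Icc 0 ρ) := c.contU ht (hρ.2.trans (c.rlt ht))
  have h0 : U t 0 = t := c.U_zero ht
  have := intermediate_value_Icc' hρ.1 hc
  obtain ⟨x, hx, hx0⟩ := this ⟨h, by rw [h0]; exact ht.le⟩
  rcases eq_or_lt_of_le hx.1 with h1 | h1
  · rw [← h1, h0] at hx0; linarith
  · exact (c.hU t ht).2.2.2.2 x ⟨h1, lt_of_le_of_lt hx.2 hρ.2⟩ hx0

/-- Comparison for `sin ρ * U'`. -/
lemma hd_sinV (c : Ctx f U r) {t ρ : ℝ} (ht : 0 < t) (hρ : ρ ∈ Ioo 0 π) (C : ℝ) :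
    HasDerivAt (fun x => sin x * deriv (U t) x + (1 - cos x) * C) (sin ρ * (C - f (U t ρ))) ρ := by
  have h1 := ((hasDerivAt_sin ρ).mul (c.hd2' ht hρ)).add
    (((hasDerivAt_const ρ (1:ℝ)).sub (hasDerivAt_cos ρ)).mul_const C)
  refine HasDerivAt.congr_deriv h1 ?_
  have : sin ρ ≠ 0 := (sin_pos_of_pos_of_lt_pi hρ.1 hρ.2).ne'
  field_simp
  ring

lemma cont_sinV (c : Ctx f U r) {t R : ℝ} (ht : 0 < t) (hR : R < π) (C : ℝ) :
    ContinuousOn (fun x => sin x * deriv (U t) x + (1 - cos x) * C) (Icc 0 R) :=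
  (continuous_sin.continuousOn.mul (c.contV ht hR)).add (by fun_prop)

lemma V_neg (c : Ctx f U r) {t ρ : ℝ} (ht : 0 < t) (hρ : ρ ∈ Ioc 0 (r t)) :
    deriv (U t) ρ < 0 := by
  have hr := c.rlt ht
  have h := strictAntiOn_of_hasDerivWithinAt_neg (convex_Icc 0 (r t)) (c.cont_sinV ht hr 0)
    (f' := fun ρ => sin ρ * (0 - f (U t ρ)))
    (fun x hx => by
      rw [interior_Icc] at hx
      exact (c.hd_sinV ht ⟨hx.1, hx.2.trans hr⟩ 0).hasDerivWithinAt)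
    (fun x hx => by
      rw [interior_Icc] at hx
      have := sin_pos_of_pos_of_lt_pi hx.1 (hx.2.trans hr)
      have := (c.hH _ (c.U_pos ht ⟨hx.1.le, hx.2⟩)).1
      nlinarith)
  have := h ⟨le_rfl, (c.rpos ht).le⟩ ⟨hρ.1.le, hρ.2⟩ hρ.1
  simp at this
  have hs := sin_pos_of_pos_of_lt_pi hρ.1 (hρ.2.trans_lt hr)
  by_contra h'
  push Not at h'
  nlinarith

lemma U_anti (c : Ctx f U r) {t : ℝ} (ht : 0 < t) : StrictAntiOn (U t) (Icc 0 (r t)) := by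
  have hr := c.rlt ht
  apply strictAntiOn_of_hasDerivWithinAt_neg (convex_Icc 0 (r t)) (c.contU ht hr)
    (f' := deriv (U t))
  · intro x hx
    rw [interior_Icc] at hx
    exact (c.hd ht ⟨by linarith [hx.1, pi_pos], hx.2.trans hr⟩).hasDerivWithinAt
  · intro x hx
    rw [interior_Icc] at hx
    exact c.V_neg ht ⟨hx.1, hx.2.le⟩

lemma U_le (c : Ctx f U r) {t ρ : ℝ} (ht : 0 < t) (hρ : ρ ∈ Icc 0 (r t)) : U t ρ ≤ t := by
  have := (c.U_anti ht).antitoneOn ⟨le_rfl, (c.rpos ht).le⟩ hρ hρ.1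
  rwa [c.U_zero ht] at this

lemma U_nonneg (c : Ctx f U r) {t ρ : ℝ} (ht : 0 < t) (hρ : ρ ∈ Icc 0 (r t)) : 0 ≤ U t ρ := by
  have := (c.U_anti ht).antitoneOn hρ ⟨(c.rpos ht).le, le_rfl⟩ hρ.2
  rwa [(c.hU t ht).2.2.2.1] at this

end Ctx

lemma f_strict {f : ℝ → ℝ} (hf : ContDiff ℝ 1 f) (M : ℝ) {ω : ℝ} (hω : 0 < ω) :
    ∃ δ > 0, ∀ u ∈ Icc 0 M, ∀ x y, |x - u| ≤ δ → |y - u| ≤ δ →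
      |f x - f y - deriv f u * (x - y)| ≤ ω * |x - y| := by
  have hc : Continuous (deriv f) := hf.continuous_deriv (by norm_num)
  have hu : UniformContinuousOn (deriv f) (Icc (-1) (M + 1)) :=
    isCompact_Icc.uniformContinuousOn_of_continuous hc.continuousOn
  rw [Metric.uniformContinuousOn_iff] at hu
  obtain ⟨δ, hδ, h⟩ := hu ω hω
  refine ⟨min (δ / 2) 1, by positivity, ?_⟩
  intro u hu x y hx hy
  have h1 : min (δ / 2) 1 ≤ δ / 2 := min_le_left _ _
  have h2 : min (δ / 2) 1 ≤ 1 := min_le_right _ _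
  set d := min (δ / 2) 1
  have key := Convex.norm_image_sub_le_of_norm_hasDerivWithin_le (s := Icc (u - d) (u + d))
    (f := fun z => f z - deriv f u * z) (f' := fun z => deriv f z - deriv f u * 1) (C := ω)
    (x := y) (y := x)
    (fun z _ => (((hf.differentiable (by norm_num)) z).hasDerivAt.sub
      ((hasDerivAt_id z).const_mul (deriv f u))).hasDerivWithinAt)
    (fun z hz => by
      have := h z ⟨by linarith [hz.1, hu.1], by linarith [hz.2, hu.2]⟩ u
        ⟨by linarith [hu.1], by linarith [hu.2]⟩ (by
          rw [Real.dist_eq]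
          have : |z - u| ≤ d := abs_le.2 ⟨by linarith [hz.1], by linarith [hz.2]⟩
          linarith)
      rw [Real.dist_eq] at this
      simpa using this.le)
    (convex_Icc _ _)
    (by rw [abs_le] at hy; exact ⟨by linarith, by linarith⟩)
    (by rw [abs_le] at hx; exact ⟨by linarith, by linarith⟩)
  simp only [Real.norm_eq_abs] at key
  convert key using 2
  ring

lemma f_lip {f : ℝ → ℝ} (hf : ContDiff ℝ 1 f) (M : ℝ) :
    ∃ L ≥ 0, (∀ x ∈ Icc 0 M, |deriv f x| ≤ L) ∧
      ∀ x ∈ Icc 0 M, ∀ y ∈ Icc 0 M, |f x - f y| ≤ L * |x - y| := by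
  have hc : Continuous (deriv f) := hf.continuous_deriv (by norm_num)
  obtain ⟨L, hL⟩ := (isCompact_Icc (a := (0:ℝ)) (b := M)).exists_bound_of_continuousOn
    hc.continuousOn
  have hb : ∀ x ∈ Icc 0 M, |deriv f x| ≤ max L 0 := fun x hx => (hL x hx).trans (le_max_left _ _)
  refine ⟨max L 0, le_max_right _ _, hb, ?_⟩
  intro x hx y hy
  exact Convex.norm_image_sub_le_of_norm_hasDerivWithin_le (s := Icc 0 M)
    (fun z _ => ((hf.differentiable (by norm_num)) z).hasDerivAt.hasDerivWithinAt)
    hb (convex_Icc _ _) hy hx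

lemma cot_lower {R : ℝ} (hR : R < π) : ∃ κ ≥ 0, ∀ x ∈ Ioo 0 R, -κ ≤ cos x / sin x := by
  rcases le_or_gt R 0 with h0 | h0
  · exact ⟨0, le_rfl, fun x hx => by linarith [hx.1, hx.2]⟩
  have hs : 0 < sin R := sin_pos_of_pos_of_lt_pi h0 hR
  refine ⟨1 / sin R, by positivity, fun x hx => ?_⟩
  have hsx : 0 < sin x := sin_pos_of_pos_of_lt_pi hx.1 (hx.2.trans hR)
  rcases le_or_gt x (π / 2) with h | h
  · have := cos_nonneg_of_mem_Icc ⟨by linarith [hx.1, pi_pos], h⟩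
    have h1 : 0 ≤ cos x / sin x := by positivity
    have h2 : 0 ≤ 1 / sin R := by positivity
    linarith
  · have h1 : sin R ≤ sin x := by
      rw [← sin_pi_sub R, ← sin_pi_sub x]
      apply sin_le_sin_of_le_of_le_pi_div_two <;> linarith [hx.2]
    have h2 : -1 ≤ cos x := neg_one_le_cos x
    have h3 : 1 / sin x ≤ 1 / sin R := one_div_le_one_div_of_le hs h1
    have h4 : -(1 / sin x) ≤ cos x / sin x := by
      rw [← neg_div]; gcongr
    linarith

namespace Ctx
variable {f : ℝ → ℝ} {U : ℝ → ℝ → ℝ} {r : ℝ → ℝ}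

lemma lip (c : Ctx f U r) (M : ℝ) {R : ℝ} (hR : R < π) :
    ∃ K ≥ 0, ∀ s s' ρ, 0 < s → s ≤ M → 0 < s' → s' ≤ M → ρ ∈ Icc 0 R → ρ ≤ r s → ρ ≤ r s' →
      |U s ρ - U s' ρ| ≤ K * |s - s'| ∧ |deriv (U s) ρ - deriv (U s') ρ| ≤ K * |s - s'| := by
  obtain ⟨L, hL0, -, hL⟩ := f_lip c.hf M
  obtain ⟨κ, hκ0, hκ⟩ := cot_lower hR
  refine ⟨Real.exp ((2 * κ + L + 2) * π), (Real.exp_pos _).le, ?_⟩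
  intro s s' ρ hs hsM hs' hsM' hρ hρs hρs'
  have hρπ : ρ < π := hρ.2.trans_lt hR
  have e := energy (a := 0) (b := ρ) (κ := κ) (A := L) (B := 0) hκ0 hL0
    (fun x => U s x - U s' x) (fun x => deriv (U s) x - deriv (U s') x)
    (fun x => cos x / sin x) (fun x => -(f (U s x) - f (U s' x))) hρ.1
    ((c.contU hs hρπ).sub (c.contU hs' hρπ)) ((c.contV hs hρπ).sub (c.contV hs' hρπ))
    (fun x hx => (c.hd hs ⟨by linarith [hx.1, pi_pos], hx.2.trans hρπ⟩).sub
      (c.hd hs' ⟨by linarith [hx.1, pi_pos], hx.2.trans hρπ⟩))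
    (fun x hx => ((c.hd2' hs ⟨hx.1, hx.2.trans hρπ⟩).sub
      (c.hd2' hs' ⟨hx.1, hx.2.trans hρπ⟩)).congr_deriv (by ring))
    (fun x hx => hκ x ⟨hx.1, hx.2.trans_le hρ.2⟩)
    (fun x hx => by
      rw [abs_neg, add_zero]
      have m1 : x ∈ Icc 0 (r s) := ⟨hx.1.le, hx.2.le.trans hρs⟩
      have m2 : x ∈ Icc 0 (r s') := ⟨hx.1.le, hx.2.le.trans hρs'⟩
      exact hL _ ⟨c.U_nonneg hs m1, (c.U_le hs m1).trans hsM⟩ _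
        ⟨c.U_nonneg hs' m2, (c.U_le hs' m2).trans hsM'⟩)
  simp only [c.U_zero hs, c.U_zero hs', c.V_zero hs, c.V_zero hs'] at e
  have hle : Real.exp ((2 * κ + L + 2) * (ρ - 0)) ≤ Real.exp ((2 * κ + L + 2) * π) := by
    apply Real.exp_le_exp.2
    apply mul_le_mul_of_nonneg_left _ (by positivity)
    linarith
  have h1 : (1:ℝ) ≤ Real.exp ((2 * κ + L + 2) * π) := Real.one_le_exp (by positivity)
  set X := Real.exp ((2 * κ + L + 2) * π)
  have h2 : (U s ρ - U s' ρ) ^ 2 + (deriv (U s) ρ - deriv (U s') ρ) ^ 2 ≤ (X * |s - s'|) ^ 2 := by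
    calc _ ≤ _ := e
      _ ≤ X * (s - s') ^ 2 := by
        have : (s - s') ^ 2 + (0 - 0) ^ 2 + 0 ^ 2 = (s - s') ^ 2 := by ring
        rw [this]
        exact mul_le_mul_of_nonneg_right hle (sq_nonneg _)
      _ ≤ X ^ 2 * (s - s') ^ 2 := by
        apply mul_le_mul_of_nonneg_right _ (sq_nonneg _)
        nlinarith
      _ = _ := by rw [mul_pow, sq_abs]
  have hX : 0 ≤ X * |s - s'| := by positivity
  constructor
  · apply abs_le_of_sq_le_sq _ hX
    nlinarith [sq_nonneg (deriv (U s) ρ - deriv (U s') ρ)]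
  · apply abs_le_of_sq_le_sq _ hX
    nlinarith [sq_nonneg (U s ρ - U s' ρ)]

lemma open_r (c : Ctx f U r) {t R : ℝ} (ht : 0 < t) (hR0 : 0 < R) (hR : R < r t) :
    ∃ η > 0, η ≤ 1 ∧ ∀ s, |s - t| < η → 0 < s ∧ s ≤ t + 1 ∧ R < r s := by
  obtain ⟨K, hK0, hK⟩ := c.lip (t + 1) (hR.trans (c.rlt ht))
  have hm : 0 < U t R := c.U_pos ht ⟨hR0.le, hR⟩
  refine ⟨min (min t 1) (U t R / (K + 1)), by positivity, (min_le_left _ _).trans (min_le_right _ _),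
    fun s hs => ?_⟩
  have h1 : |s - t| < t := hs.trans_le ((min_le_left _ _).trans (min_le_left _ _))
  have h2 : |s - t| < 1 := hs.trans_le ((min_le_left _ _).trans (min_le_right _ _))
  have h3 : |s - t| < U t R / (K + 1) := hs.trans_le (min_le_right _ _)
  have hs0 : 0 < s := by linarith [(abs_lt.1 h1).1]
  have hs1 : s ≤ t + 1 := by linarith [(abs_lt.1 h2).2]
  refine ⟨hs0, hs1, ?_⟩
  by_contra hcon
  push Not at hcon
  have := (hK s t (r s) hs0 hs1 ht (by linarith) ⟨(c.rpos hs0).le, hcon⟩ le_rfl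
    (hcon.trans hR.le)).1
  rw [(c.hU s hs0).2.2.2.1] at this
  have h4 : U t R ≤ U t (r s) := (c.U_anti ht).antitoneOn
    ⟨(c.rpos hs0).le, hcon.trans hR.le⟩ ⟨hR0.le, hR.le⟩ hcon
  have h5 : U t (r s) ≤ K * |s - t| := by
    have := (abs_le.1 this).1; linarith
  rw [lt_div_iff₀ (by positivity)] at h3
  nlinarith [abs_nonneg (s - t)]

/-- uniform Cauchy property of divided differences. -/
lemma quot (c : Ctx f U r) {t R : ℝ} (ht : 0 < t) (hR0 : 0 < R) (hR : R < r t)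
    {ε : ℝ} (hε : 0 < ε) :
    ∃ η > 0, ∀ s s' q q', |s - t| < η → |s' - t| < η → |q - t| < η → |q' - t| < η →
      s ≠ s' → q ≠ q' → ∀ ρ ∈ Icc 0 R,
      |(U s ρ - U s' ρ) / (s - s') - (U q ρ - U q' ρ) / (q - q')| ≤ ε ∧
      |(deriv (U s) ρ - deriv (U s') ρ) / (s - s') -
        (deriv (U q) ρ - deriv (U q') ρ) / (q - q')| ≤ ε := by
  have hRπ := hR.trans (c.rlt ht)
  obtain ⟨η₀, hη₀, -, hN⟩ := c.open_r ht hR0 hR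
  obtain ⟨K, hK0, hK⟩ := c.lip (t + 1) hRπ
  obtain ⟨L, hL0, hLd, -⟩ := f_lip c.hf (t + 1)
  obtain ⟨κ, hκ0, hκ⟩ := cot_lower hRπ
  set X := Real.exp ((2 * κ + L + 2) * π) with hX
  have hX1 : (1:ℝ) ≤ X := Real.one_le_exp (by positivity)
  set ω := ε / (X * (2 * K + 1)) with hω
  have hω0 : 0 < ω := by positivity
  obtain ⟨δ, hδ, hstr⟩ := f_strict c.hf (t + 1) hω0
  refine ⟨min η₀ (δ / (K + 1)), by positivity, ?_⟩
  intro s s' q q' hs hs' hq hq' hss hqq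
  have H : ∀ s, |s - t| < min η₀ (δ / (K + 1)) → 0 < s ∧ s ≤ t + 1 ∧ R < r s ∧
      ∀ ρ ∈ Icc 0 R, |U s ρ - U t ρ| ≤ δ := by
    intro s hs
    obtain ⟨a1, a2, a3⟩ := hN s (hs.trans_le (min_le_left _ _))
    refine ⟨a1, a2, a3, fun ρ hρ => ?_⟩
    have h3 : |s - t| < δ / (K + 1) := hs.trans_le (min_le_right _ _)
    rw [lt_div_iff₀ (by positivity)] at h3
    have := (hK s t ρ a1 a2 ht (by linarith) hρ (hρ.2.trans a3.le) (hρ.2.trans hR.le)).1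
    nlinarith [abs_nonneg (s - t)]
  -- error estimate for each pair
  have P : ∀ s s', |s - t| < min η₀ (δ / (K + 1)) → |s' - t| < min η₀ (δ / (K + 1)) → s ≠ s' →
      ∀ ρ ∈ Icc 0 R, |(f (U s ρ) - f (U s' ρ)) / (s - s') -
        deriv f (U t ρ) * ((U s ρ - U s' ρ) / (s - s'))| ≤ ω * K := by
    intro s s' hs hs' hne ρ hρ
    obtain ⟨a1, a2, a3, a4⟩ := H s hs
    obtain ⟨b1, b2, b3, b4⟩ := H s' hs'
    have m : ρ ∈ Icc 0 (r t) := ⟨hρ.1, hρ.2.trans hR.le⟩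
    have h1 := hstr (U t ρ) ⟨c.U_nonneg ht m, (c.U_le ht m).trans (by linarith)⟩ _ _
      (a4 ρ hρ) (b4 ρ hρ)
    have h2 := (hK s s' ρ a1 a2 b1 b2 hρ (hρ.2.trans a3.le) (hρ.2.trans b3.le)).1
    have hne' : 0 < |s - s'| := abs_pos.2 (sub_ne_zero.2 hne)
    rw [← mul_div_assoc, ← sub_div, abs_div, div_le_iff₀ hne']
    calc _ ≤ _ := h1
      _ ≤ ω * (K * |s - s'|) := by gcongr
      _ = _ := by ring
  intro ρ hρ
  have hρπ : ρ < π := hρ.2.trans_lt hRπ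
  obtain ⟨s1, -⟩ := H s hs
  obtain ⟨s1', -⟩ := H s' hs'
  obtain ⟨q1, -⟩ := H q hq
  obtain ⟨q1', -⟩ := H q' hq'
  have e := energy (a := 0) (b := ρ) (κ := κ) (A := L) (B := 2 * (ω * K)) hκ0 hL0
    (fun x => (U s x - U s' x) / (s - s') - (U q x - U q' x) / (q - q'))
    (fun x => (deriv (U s) x - deriv (U s') x) / (s - s') -
      (deriv (U q) x - deriv (U q') x) / (q - q'))
    (fun x => cos x / sin x)
    (fun x => -((f (U s x) - f (U s' x)) / (s - s') - (f (U q x) - f (U q' x)) / (q - q'))) hρ.1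
    ((((c.contU s1 hρπ).sub (c.contU s1' hρπ)).div_const _).sub
      (((c.contU q1 hρπ).sub (c.contU q1' hρπ)).div_const _))
    ((((c.contV s1 hρπ).sub (c.contV s1' hρπ)).div_const _).sub
      (((c.contV q1 hρπ).sub (c.contV q1' hρπ)).div_const _))
    (fun x hx => by
      have hx' : x ∈ Ioo (-π) π := ⟨by linarith [hx.1, pi_pos], hx.2.trans hρπ⟩
      exact (((c.hd s1 hx').sub (c.hd s1' hx')).div_const _).sub
        (((c.hd q1 hx').sub (c.hd q1' hx')).div_const _))
    (fun x hx => by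
      have hx' : x ∈ Ioo 0 π := ⟨hx.1, hx.2.trans hρπ⟩
      exact ((((c.hd2' s1 hx').sub (c.hd2' s1' hx')).div_const _).sub
        (((c.hd2' q1 hx').sub (c.hd2' q1' hx')).div_const _)).congr_deriv (by ring))
    (fun x hx => hκ x ⟨hx.1, hx.2.trans_le hρ.2⟩)
    (fun x hx => by
      have hx' : x ∈ Icc 0 R := ⟨hx.1.le, hx.2.le.trans hρ.2⟩
      have m : x ∈ Icc 0 (r t) := ⟨hx'.1, hx'.2.trans hR.le⟩
      have p1 := abs_le.1 (P s s' hs hs' hss x hx')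
      have p2 := abs_le.1 (P q q' hq hq' hqq x hx')
      have d := hLd (U t x) ⟨c.U_nonneg ht m, (c.U_le ht m).trans (by linarith)⟩
      have d2 : |deriv f (U t x) * ((U s x - U s' x) / (s - s') - (U q x - U q' x) / (q - q'))|
          ≤ L * |(U s x - U s' x) / (s - s') - (U q x - U q' x) / (q - q')| := by
        rw [abs_mul]; gcongr
      rw [abs_neg]
      have d3 := abs_le.1 d2
      rw [mul_sub] at d3
      rw [abs_le]
      constructor <;> linarith [p1.1, p1.2, p2.1, p2.2, d3.1, d3.2])
  simp only [c.U_zero s1, c.U_zero s1', c.V_zero s1, c.V_zero s1', c.U_zero q1, c.U_zero q1',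
    c.V_zero q1, c.V_zero q1', div_self (sub_ne_zero.2 hss), div_self (sub_ne_zero.2 hqq)] at e
  have hle : Real.exp ((2 * κ + L + 2) * (ρ - 0)) ≤ X := by
    apply Real.exp_le_exp.2
    apply mul_le_mul_of_nonneg_left _ (by positivity)
    linarith
  set y := (U s ρ - U s' ρ) / (s - s') - (U q ρ - U q' ρ) / (q - q')
  set z := (deriv (U s) ρ - deriv (U s') ρ) / (s - s') -
        (deriv (U q) ρ - deriv (U q') ρ) / (q - q')
  have h2 : y ^ 2 + z ^ 2 ≤ ε ^ 2 := by
    calc _ ≤ _ := e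
      _ ≤ X * (2 * (ω * K)) ^ 2 := by
        have : ((1:ℝ) - 1) ^ 2 + ((0 - 0) / (s - s') - (0 - 0) / (q - q')) ^ 2
          + (2 * (ω * K)) ^ 2 = (2 * (ω * K)) ^ 2 := by ring
        rw [this]
        exact mul_le_mul_of_nonneg_right hle (sq_nonneg _)
      _ ≤ X ^ 2 * (2 * (ω * K)) ^ 2 := by
        apply mul_le_mul_of_nonneg_right _ (sq_nonneg _)
        nlinarith
      _ = (X * (2 * K) * ω) ^ 2 := by ring
      _ ≤ (X * (2 * K + 1) * ω) ^ 2 := by gcongr; linarith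
      _ = ε ^ 2 := by
        congr 1
        rw [hω]; field_simp
  constructor
  · apply abs_le_of_sq_le_sq _ hε.le
    nlinarith [sq_nonneg z]
  · apply abs_le_of_sq_le_sq _ hε.le
    nlinarith [sq_nonneg y]

end Ctx

/-- `∂_t U`. -/
noncomputable def phi (U : ℝ → ℝ → ℝ) (t ρ : ℝ) : ℝ := deriv (fun s => U s ρ) t
/-- `∂_t U'`. -/
noncomputable def psi (U : ℝ → ℝ → ℝ) (t ρ : ℝ) : ℝ := deriv (fun s => deriv (U s) ρ) t

lemma hasDerivAt_of_cauchy (g : ℝ → ℝ) (t : ℝ)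
    (h : ∀ ε > 0, ∃ η > 0, ∀ s s' q q', |s - t| < η → |s' - t| < η → |q - t| < η → |q' - t| < η →
      s ≠ s' → q ≠ q' → |(g s - g s') / (s - s') - (g q - g q') / (q - q')| ≤ ε) :
    HasDerivAt g (deriv g t) t := by
  have hC : Cauchy (map (slope g t) (𝓝[≠] t)) := by
    rw [Metric.cauchy_iff]
    refine ⟨inferInstance, fun ε hε => ?_⟩
    obtain ⟨η, hη, H⟩ := h (ε / 2) (by positivity)
    refine ⟨slope g t '' {s | |s - t| < η ∧ s ≠ t}, image_mem_map ?_, ?_⟩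
    · have : Metric.ball t η ∩ {t}ᶜ ∈ 𝓝[≠] t :=
        inter_mem (mem_nhdsWithin_of_mem_nhds (Metric.ball_mem_nhds t hη)) self_mem_nhdsWithin
      filter_upwards [this] with s hs
      exact ⟨by simpa [Real.dist_eq] using hs.1, hs.2⟩
    · rintro _ ⟨s, ⟨hs, hst⟩, rfl⟩ _ ⟨q, ⟨hq, hqt⟩, rfl⟩
      have := H s t q t hs (by simpa) hq (by simpa) hst hqt
      rw [Real.dist_eq, slope_def_field, slope_def_field]
      linarith
  obtain ⟨l, hl⟩ := CompleteSpace.complete hC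
  have : HasDerivAt g l t := hasDerivAt_iff_tendsto_slope.2 hl
  exact this.differentiableAt.hasDerivAt

lemma limit_cauchy (g : ℝ → ℝ) {t η ε : ℝ} {s s' q : ℝ}
    (h : ∀ s s' q q', |s - t| < η → |s' - t| < η → |q - t| < η → |q' - t| < η →
      s ≠ s' → q ≠ q' → |(g s - g s') / (s - s') - (g q - g q') / (q - q')| ≤ ε)
    (hs : |s - t| < η) (hs' : |s' - t| < η) (hq : |q - t| < η) (hss : s ≠ s')
    (hd : HasDerivAt g (deriv g q) q) :
    |(g s - g s') / (s - s') - deriv g q| ≤ ε := by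
  have h1 := hasDerivAt_iff_tendsto_slope.1 hd
  have h2 := (tendsto_const_nhds (x := (g s - g s') / (s - s')) |>.sub h1).abs
  refine le_of_tendsto h2 ?_
  have : Metric.ball t η ∩ {q}ᶜ ∈ 𝓝[≠] q :=
    inter_mem (mem_nhdsWithin_of_mem_nhds (Metric.isOpen_ball.mem_nhds
      (by simpa [Real.dist_eq] using hq))) self_mem_nhdsWithin
  filter_upwards [this] with x hx
  have hx1 : |x - t| < η := by simpa [Real.dist_eq] using hx.1
  have := h s s' x q hs hs' hx1 hq hss hx.2
  rwa [slope_def_field]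

lemma limit_cauchy2 (g : ℝ → ℝ) {t η ε : ℝ} {q q' : ℝ}
    (h : ∀ s s' q q', |s - t| < η → |s' - t| < η → |q - t| < η → |q' - t| < η →
      s ≠ s' → q ≠ q' → |(g s - g s') / (s - s') - (g q - g q') / (q - q')| ≤ ε)
    (hq : |q - t| < η) (hq' : |q' - t| < η)
    (hd : HasDerivAt g (deriv g q) q) (hd' : HasDerivAt g (deriv g q') q') :
    |deriv g q - deriv g q'| ≤ ε := by
  have h1 := hasDerivAt_iff_tendsto_slope.1 hd
  have h2 := (h1.sub_const (deriv g q')).abs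
  refine le_of_tendsto h2 ?_
  have : Metric.ball t η ∩ {q}ᶜ ∈ 𝓝[≠] q :=
    inter_mem (mem_nhdsWithin_of_mem_nhds (Metric.isOpen_ball.mem_nhds
      (by simpa [Real.dist_eq] using hq))) self_mem_nhdsWithin
  filter_upwards [this] with x hx
  have hx1 : |x - t| < η := by simpa [Real.dist_eq] using hx.1
  have := limit_cauchy g h hx1 hq hq' hx.2 hd'
  rwa [slope_def_field]

namespace Ctx
variable {f : ℝ → ℝ} {U : ℝ → ℝ → ℝ} {r : ℝ → ℝ}

lemma quot' (c : Ctx f U r) {t R : ℝ} (ht : 0 < t) (hR0 : 0 < R) (hR : R < r t)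
    {ε : ℝ} (hε : 0 < ε) :
    ∃ η > 0, (∀ s, |s - t| < η → 0 < s ∧ R < r s) ∧ ∀ ρ ∈ Icc (-R) R,
      (∀ s s' q q', |s - t| < η → |s' - t| < η → |q - t| < η → |q' - t| < η →
      s ≠ s' → q ≠ q' →
      |(U s ρ - U s' ρ) / (s - s') - (U q ρ - U q' ρ) / (q - q')| ≤ ε) ∧
      (∀ s s' q q', |s - t| < η → |s' - t| < η → |q - t| < η → |q' - t| < η →
      s ≠ s' → q ≠ q' →
      |(deriv (U s) ρ - deriv (U s') ρ) / (s - s') -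
        (deriv (U q) ρ - deriv (U q') ρ) / (q - q')| ≤ ε) := by
  obtain ⟨η, hη, h⟩ := c.quot ht hR0 hR hε
  obtain ⟨η₀, hη₀, -, hN⟩ := c.open_r ht hR0 hR
  have hRπ := hR.trans (c.rlt ht)
  refine ⟨min η η₀, by positivity, fun s hs => ?_, fun ρ hρ => ?_⟩
  · obtain ⟨a, -, b⟩ := hN s (hs.trans_le (min_le_right _ _))
    exact ⟨a, b⟩
  have hρ' : -ρ ∈ Ioo (-π) π := ⟨by linarith [hρ.2], by linarith [hρ.1]⟩
  have key : ∀ s s' q q', |s - t| < min η η₀ → |s' - t| < min η η₀ → |q - t| < min η η₀ →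
      |q' - t| < min η η₀ → s ≠ s' → q ≠ q' →
      |(U s ρ - U s' ρ) / (s - s') - (U q ρ - U q' ρ) / (q - q')| ≤ ε ∧
      |(deriv (U s) ρ - deriv (U s') ρ) / (s - s') -
        (deriv (U q) ρ - deriv (U q') ρ) / (q - q')| ≤ ε := by
    intro s s' q q' h1 h2 h3 h4 h5 h6
    have H := h s s' q q' (h1.trans_le (min_le_left _ _)) (h2.trans_le (min_le_left _ _))
      (h3.trans_le (min_le_left _ _)) (h4.trans_le (min_le_left _ _)) h5 h6
    rcases le_or_gt 0 ρ with h0 | h0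
    · exact H ρ ⟨h0, hρ.2⟩
    · have H2 := H (-ρ) ⟨by linarith, by linarith [hρ.1]⟩
      have E : ∀ s, |s - t| < min η η₀ → U s (-ρ) = U s ρ ∧ deriv (U s) (-ρ) = - deriv (U s) ρ := by
        intro s hs
        have hs0 := (hN s (hs.trans_le (min_le_right _ _))).1
        have e1 := (c.hU s hs0).1.1 (-ρ) hρ'
        have e2 := c.V_odd hs0 hρ'
        rw [neg_neg] at e1 e2
        exact ⟨e1.symm, by linarith⟩
      rw [(E s h1).1, (E s h1).2, (E s' h2).1, (E s' h2).2, (E q h3).1, (E q h3).2,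
        (E q' h4).1, (E q' h4).2] at H2
      refine ⟨H2.1, ?_⟩
      rw [← abs_neg]
      convert H2.2 using 2
      ring
  exact ⟨fun s s' q q' h1 h2 h3 h4 h5 h6 => (key s s' q q' h1 h2 h3 h4 h5 h6).1,
    fun s s' q q' h1 h2 h3 h4 h5 h6 => (key s s' q q' h1 h2 h3 h4 h5 h6).2⟩

lemma exR (c : Ctx f U r) {t ρ : ℝ} (ht : 0 < t) (hρ : ρ ∈ Ioo (-r t) (r t)) :
    ∃ R, 0 < R ∧ R < r t ∧ ρ ∈ Ioo (-R) R := by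
  have h : |ρ| < r t := abs_lt.2 ⟨hρ.1, hρ.2⟩
  refine ⟨(|ρ| + r t) / 2, ?_, by linarith, ?_⟩
  · linarith [abs_nonneg ρ]
  · apply abs_lt.1; linarith

lemma hd_t (c : Ctx f U r) {t ρ : ℝ} (ht : 0 < t) (hρ : ρ ∈ Ioo (-r t) (r t)) :
    HasDerivAt (fun s => U s ρ) (phi U t ρ) t ∧
      HasDerivAt (fun s => deriv (U s) ρ) (psi U t ρ) t := by
  obtain ⟨R, hR0, hR, hρR⟩ := c.exR ht hρ
  have hρR' := Ioo_subset_Icc_self hρR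
  constructor
  · apply hasDerivAt_of_cauchy
    intro ε hε
    obtain ⟨η, hη, -, h⟩ := c.quot' ht hR0 hR hε
    exact ⟨η, hη, (h ρ hρR').1⟩
  · apply hasDerivAt_of_cauchy
    intro ε hε
    obtain ⟨η, hη, -, h⟩ := c.quot' ht hR0 hR hε
    exact ⟨η, hη, (h ρ hρR').2⟩

lemma unif (c : Ctx f U r) {t R : ℝ} (ht : 0 < t) (hR0 : 0 < R) (hR : R < r t)
    {ε : ℝ} (hε : 0 < ε) :
    ∃ η > 0, (∀ s, |s - t| < η → 0 < s ∧ R < r s) ∧ ∀ s, |s - t| < η → ∀ ρ ∈ Icc (-R) R,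
      |phi U s ρ - phi U t ρ| ≤ ε ∧ |psi U s ρ - psi U t ρ| ≤ ε ∧
      (s ≠ t → |(U s ρ - U t ρ) / (s - t) - phi U t ρ| ≤ ε ∧
        |(deriv (U s) ρ - deriv (U t) ρ) / (s - t) - psi U t ρ| ≤ ε) := by
  obtain ⟨η, hη, hN, h⟩ := c.quot' ht hR0 hR hε
  refine ⟨η, hη, hN, fun s hs ρ hρ => ?_⟩
  have D : ∀ s, |s - t| < η → HasDerivAt (fun s => U s ρ) (phi U s ρ) s ∧
      HasDerivAt (fun s => deriv (U s) ρ) (psi U s ρ) s := fun s hs =>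
    c.hd_t (hN s hs).1 ⟨by linarith [hρ.1, (hN s hs).2], by linarith [hρ.2, (hN s hs).2]⟩
  have htt : |t - t| < η := by simpa
  refine ⟨limit_cauchy2 _ (h ρ hρ).1 hs htt (D s hs).1 (D t htt).1,
    limit_cauchy2 _ (h ρ hρ).2 hs htt (D s hs).2 (D t htt).2, fun hne => ⟨?_, ?_⟩⟩
  · exact limit_cauchy (fun s => U s ρ) (h ρ hρ).1 hs htt htt hne (D t htt).1
  · exact limit_cauchy (fun s => deriv (U s) ρ) (h ρ hρ).2 hs htt htt hne (D t htt).2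

lemma unif_tendsto (c : Ctx f U r) {t R : ℝ} (ht : 0 < t) (hR0 : 0 < R) (hR : R < r t) :
    TendstoUniformlyOn (fun s ρ => (U s ρ - U t ρ) / (s - t)) (phi U t) (𝓝[≠] t) (Icc (-R) R) ∧
    TendstoUniformlyOn (fun s ρ => (deriv (U s) ρ - deriv (U t) ρ) / (s - t)) (psi U t)
      (𝓝[≠] t) (Icc (-R) R) := by
  have key : ∀ ε > 0, ∀ᶠ s in 𝓝[≠] t, ∀ ρ ∈ Icc (-R) R,
      |(U s ρ - U t ρ) / (s - t) - phi U t ρ| < ε ∧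
        |(deriv (U s) ρ - deriv (U t) ρ) / (s - t) - psi U t ρ| < ε := by
    intro ε hε
    obtain ⟨η, hη, hN, h⟩ := c.unif ht hR0 hR (half_pos hε)
    have : Metric.ball t η ∩ {t}ᶜ ∈ 𝓝[≠] t :=
      inter_mem (mem_nhdsWithin_of_mem_nhds (Metric.ball_mem_nhds t hη)) self_mem_nhdsWithin
    filter_upwards [this] with s hs ρ hρ
    have := (h s (by simpa [Real.dist_eq] using hs.1) ρ hρ).2.2 hs.2
    exact ⟨by linarith [this.1], by linarith [this.2]⟩
  constructor
  · rw [Metric.tendstoUniformlyOn_iff]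
    intro ε hε
    filter_upwards [key ε hε] with s hs ρ hρ
    rw [dist_comm, Real.dist_eq]
    exact (hs ρ hρ).1
  · rw [Metric.tendstoUniformlyOn_iff]
    intro ε hε
    filter_upwards [key ε hε] with s hs ρ hρ
    rw [dist_comm, Real.dist_eq]
    exact (hs ρ hρ).2

lemma ev_pos {t : ℝ} (ht : 0 < t) : ∀ᶠ s in 𝓝[≠] t, 0 < s ∧ s ≠ t := by
  have : Ioi 0 ∩ {t}ᶜ ∈ 𝓝[≠] t :=
    inter_mem (mem_nhdsWithin_of_mem_nhds (Ioi_mem_nhds ht)) self_mem_nhdsWithin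
  filter_upwards [this] with s hs using ⟨hs.1, hs.2⟩

lemma cont_phi (c : Ctx f U r) {t R : ℝ} (ht : 0 < t) (hR0 : 0 < R) (hR : R < r t) :
    ContinuousOn (phi U t) (Icc (-R) R) ∧ ContinuousOn (psi U t) (Icc (-R) R) := by
  have hRπ := hR.trans (c.rlt ht)
  obtain ⟨h1, h2⟩ := c.unif_tendsto ht hR0 hR
  have cu : ∀ s, 0 < s → ContinuousOn (U s) (Icc (-R) R) := fun s hs x hx =>
    (c.hd hs ⟨by linarith [hx.1], by linarith [hx.2]⟩).continuousAt.continuousWithinAt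
  have cv : ∀ s, 0 < s → ContinuousOn (deriv (U s)) (Icc (-R) R) := fun s hs x hx =>
    (c.hd2 hs ⟨by linarith [hx.1], by linarith [hx.2]⟩).continuousAt.continuousWithinAt
  constructor
  · refine h1.continuousOn (Eventually.frequently ?_)
    filter_upwards [ev_pos ht] with s hs
    exact ((cu s hs.1).sub (cu t ht)).div_const _
  · refine h2.continuousOn (Eventually.frequently ?_)
    filter_upwards [ev_pos ht] with s hs
    exact ((cv s hs.1).sub (cv t ht)).div_const _

lemma hd_phi (c : Ctx f U r) {t ρ : ℝ} (ht : 0 < t) (hρ : ρ ∈ Ioo 0 (r t)) :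
    HasDerivAt (phi U t) (psi U t ρ) ρ := by
  obtain ⟨R, hR0, hR, hρR⟩ := c.exR ht (ρ := ρ) ⟨by linarith [hρ.1, hρ.2], hρ.2⟩
  have hRπ := hR.trans (c.rlt ht)
  obtain ⟨h1, h2⟩ := c.unif_tendsto ht hR0 hR
  refine hasDerivAt_of_tendstoUniformlyOn isOpen_Ioo (h2.mono Ioo_subset_Icc_self) ?_
    (fun x hx => h1.tendsto_at (Ioo_subset_Icc_self hx)) hρR
  filter_upwards [ev_pos ht] with s hs x hx
  have hx' : x ∈ Ioo (-π) π := ⟨by linarith [hx.1], by linarith [hx.2]⟩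
  exact ((c.hd hs.1 hx').sub (c.hd ht hx')).div_const _

lemma quot_f (c : Ctx f U r) {t R : ℝ} (ht : 0 < t) (hR0 : 0 < R) (hR : R < r t)
    {ε : ℝ} (hε : 0 < ε) :
    ∀ᶠ s in 𝓝[≠] t, ∀ ρ ∈ Icc 0 R, |(f (U s ρ) - f (U t ρ)) / (s - t) -
        deriv f (U t ρ) * phi U t ρ| < ε := by
  have hRπ := hR.trans (c.rlt ht)
  obtain ⟨K, hK0, hK⟩ := c.lip (t + 1) hRπ
  obtain ⟨L, hL0, hLd, -⟩ := f_lip c.hf (t + 1)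
  obtain ⟨δ, hδ, hstr⟩ := f_strict c.hf (t + 1) (ω := ε / (4 * (K + 1))) (by positivity)
  obtain ⟨η₀, hη₀, -, hN⟩ := c.open_r ht hR0 hR
  obtain ⟨η, hη, -, h⟩ := c.unif ht hR0 hR (ε := ε / (4 * (L + 1))) (by positivity)
  have : Metric.ball t (min (min η₀ η) (δ / (K + 1))) ∩ {t}ᶜ ∈ 𝓝[≠] t :=
      inter_mem (mem_nhdsWithin_of_mem_nhds (Metric.ball_mem_nhds t (by positivity)))
        self_mem_nhdsWithin
  filter_upwards [this] with s hs ρ hρ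
  obtain ⟨hs1, hst : s ≠ t⟩ := hs
  rw [Metric.mem_ball, Real.dist_eq] at hs1
  have i1 : |s - t| < η₀ := hs1.trans_le ((min_le_left _ _).trans (min_le_left _ _))
  have i2 : |s - t| < η := hs1.trans_le ((min_le_left _ _).trans (min_le_right _ _))
  have i3 : |s - t| < δ / (K + 1) := hs1.trans_le (min_le_right _ _)
  rw [lt_div_iff₀ (by positivity)] at i3
  obtain ⟨a1, a2, a3⟩ := hN s i1
  have m : ρ ∈ Icc 0 (r t) := ⟨hρ.1, hρ.2.trans hR.le⟩
  have hUt : U t ρ ∈ Icc 0 (t + 1) := ⟨c.U_nonneg ht m, (c.U_le ht m).trans (by linarith)⟩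
  have k := (hK s t ρ a1 a2 ht (by linarith) hρ (hρ.2.trans a3.le) m.2).1
  have h1 := hstr (U t ρ) hUt (U s ρ) (U t ρ)
    (by nlinarith [abs_nonneg (s - t)]) (by simpa using hδ.le)
  have h2 := ((h s i2 ρ ⟨by linarith [hρ.1], hρ.2⟩).2.2 hst).1
  have hne : 0 < |s - t| := abs_pos.2 (sub_ne_zero.2 hst)
  have e1 : |(f (U s ρ) - f (U t ρ)) / (s - t) -
      deriv f (U t ρ) * ((U s ρ - U t ρ) / (s - t))| ≤ ε / (4 * (K + 1)) * K := by
    rw [← mul_div_assoc, ← sub_div, abs_div, div_le_iff₀ hne]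
    calc _ ≤ _ := h1
      _ ≤ ε / (4 * (K + 1)) * (K * |s - t|) := by gcongr
      _ = _ := by ring
  have e2 : |deriv f (U t ρ) * ((U s ρ - U t ρ) / (s - t) - phi U t ρ)| ≤
      L * (ε / (4 * (L + 1))) := by
    rw [abs_mul]; gcongr; exact hLd _ hUt
  have e3 : ε / (4 * (K + 1)) * K ≤ ε / 4 := by
    rw [div_mul_eq_mul_div, div_le_div_iff₀ (by positivity) (by positivity)]; nlinarith
  have e4 : L * (ε / (4 * (L + 1))) ≤ ε / 4 := by
    rw [mul_div_assoc', div_le_div_iff₀ (by positivity) (by positivity)]; nlinarith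
  have e1' := abs_le.1 e1
  have e2' := abs_le.1 e2
  rw [mul_sub] at e2'
  rw [abs_lt]
  constructor <;> linarith [e1'.1, e1'.2, e2'.1, e2'.2]

lemma hd_psi (c : Ctx f U r) {t ρ : ℝ} (ht : 0 < t) (hρ : ρ ∈ Ioo 0 (r t)) :
    HasDerivAt (psi U t) (-(cos ρ / sin ρ) * psi U t ρ - deriv f (U t ρ) * phi U t ρ) ρ := by
  obtain ⟨R, hR0, hR, hρR⟩ := c.exR ht (ρ := ρ) ⟨by linarith [hρ.1, hρ.2], hρ.2⟩
  have hRπ := hR.trans (c.rlt ht)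
  obtain ⟨h1, h2⟩ := c.unif_tendsto ht hR0 hR
  have hs : ∀ x ∈ Ioo 0 R, HasDerivAt (fun x => sin x * psi U t x)
      (-sin x * (deriv f (U t x) * phi U t x)) x := by
    intro x hx
    refine hasDerivAt_of_tendstoUniformlyOn (l := 𝓝[≠] t) (s := Ioo 0 R)
      (f := fun s x => sin x * ((deriv (U s) x - deriv (U t) x) / (s - t)))
      (f' := fun s x => -sin x * ((f (U s x) - f (U t x)) / (s - t)))
      (g' := fun x => -sin x * (deriv f (U t x) * phi U t x)) isOpen_Ioo ?_ ?_ ?_ hx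
    · rw [Metric.tendstoUniformlyOn_iff]
      intro ε hε
      filter_upwards [c.quot_f ht hR0 hR hε] with s hs y hy
      rw [dist_comm, Real.dist_eq, ← mul_sub, abs_mul, abs_neg]
      have := hs y (Ioo_subset_Icc_self hy)
      nlinarith [abs_sin_le_one y, abs_nonneg (sin y), abs_nonneg ((f (U s y) - f (U t y)) / (s - t) -
        deriv f (U t y) * phi U t y)]
    · filter_upwards [ev_pos ht] with s hs y hy
      have hy' : y ∈ Ioo 0 π := ⟨hy.1, hy.2.trans hRπ⟩
      refine ((hasDerivAt_sin y).mul (((c.hd2' hs.1 hy').sub (c.hd2' ht hy')).div_const _)).congr_deriv ?_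
      have h0 : sin y ≠ 0 := (sin_pos_of_pos_of_lt_pi hy'.1 hy'.2).ne'
      have h00 : s - t ≠ 0 := sub_ne_zero.2 hs.2
      simp only [Pi.sub_apply]
      field_simp
      ring
    · intro y hy
      exact (h2.tendsto_at (x := y) ⟨by linarith [hy.1], hy.2.le⟩).const_mul _
  have hsρ : sin ρ ≠ 0 := (sin_pos_of_pos_of_lt_pi hρ.1 (hρ.2.trans (c.rlt ht))).ne'
  have h3 := (hs ρ ⟨hρ.1, hρR.2⟩).div (hasDerivAt_sin ρ) hsρ
  have h4 : (fun x => sin x * psi U t x) / sin =ᶠ[𝓝 ρ] psi U t := by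
    have : ∀ᶠ x in 𝓝 ρ, sin x ≠ 0 := continuous_sin.continuousAt.eventually_ne hsρ
    filter_upwards [this] with x hx
    simp only [Pi.div_apply]
    field_simp
  refine (h3.congr_of_eventuallyEq h4.symm).congr_deriv ?_
  field_simp
  ring

lemma phi_zero (c : Ctx f U r) {t : ℝ} (ht : 0 < t) : phi U t 0 = 1 ∧ psi U t 0 = 0 := by
  constructor
  · have : (fun s => U s 0) =ᶠ[𝓝 t] fun s => s := by
      filter_upwards [Ioi_mem_nhds ht] with s hs using c.U_zero hs
    rw [phi, this.deriv_eq]; simp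
  · have : (fun s => deriv (U s) 0) =ᶠ[𝓝 t] fun s => 0 := by
      filter_upwards [Ioi_mem_nhds ht] with s hs using c.V_zero hs
    rw [psi, this.deriv_eq]; simp

end Ctx

namespace Ctx
variable {f : ℝ → ℝ} {U : ℝ → ℝ → ℝ} {r : ℝ → ℝ}

lemma cont4 (c : Ctx f U r) {t ρ : ℝ} (ht : 0 < t) (hρ0 : 0 ≤ ρ) (hρ : ρ < r t) :
    ContinuousOn (phi U t) (Icc 0 ρ) ∧ ContinuousOn (psi U t) (Icc 0 ρ) := by
  obtain ⟨R, hR0, hR, hρR⟩ := c.exR ht (ρ := ρ) ⟨by linarith, hρ⟩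
  have hsub : Icc 0 ρ ⊆ Icc (-R) R := Icc_subset_Icc (by linarith) hρR.2.le
  obtain ⟨h1, h2⟩ := c.cont_phi ht hR0 hR
  exact ⟨h1.mono hsub, h2.mono hsub⟩

lemma phi_pos (c : Ctx f U r) {t ρ : ℝ} (ht : 0 < t) (hρ : ρ ∈ Ico 0 (r t)) :
    0 < phi U t ρ := by
  by_contra hcon
  push Not at hcon
  obtain ⟨hc1, -⟩ := c.cont4 ht hρ.1 hρ.2
  set S := Icc 0 ρ ∩ phi U t ⁻¹' (Iic 0) with hS
  have hScl : IsClosed S := hc1.preimage_isClosed_of_isClosed isClosed_Icc isClosed_Iic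
  have hSne : S.Nonempty := ⟨ρ, ⟨hρ.1, le_rfl⟩, hcon⟩
  have hSbd : BddBelow S := ⟨0, fun x hx => hx.1.1⟩
  have hmem := hScl.csInf_mem hSne hSbd
  have hlt : ∀ x ∈ Ico 0 (sInf S), 0 < phi U t x := by
    intro x hx
    by_contra h
    push Not at h
    have : x ∈ S := ⟨⟨hx.1, hx.2.le.trans hmem.1.2⟩, h⟩
    exact absurd (csInf_le hSbd this) (not_le.2 hx.2)
  set b := sInf S
  have hb0 : 0 ≤ b := hmem.1.1
  have hbr : b < r t := hmem.1.2.trans_lt hρ.2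
  have hbπ := hbr.trans (c.rlt ht)
  have hbphi : phi U t b ≤ 0 := hmem.2
  obtain ⟨hcp, hcs⟩ := c.cont4 ht hb0 hbr
  have hW : AntitoneOn (fun x => sin x * (phi U t x * deriv (U t) x - psi U t x * U t x))
      (Icc 0 b) := by
    apply antitoneOn_of_hasDerivWithinAt_nonpos (convex_Icc 0 b)
      (f' := fun x => sin x * phi U t x * (U t x * deriv f (U t x) - f (U t x)))
    · exact continuous_sin.continuousOn.mul ((hcp.mul (c.contV ht hbπ)).sub
        (hcs.mul (c.contU ht hbπ)))
    · intro x hx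
      rw [interior_Icc] at hx
      have hxr : x ∈ Ioo 0 (r t) := ⟨hx.1, hx.2.trans hbr⟩
      have hxπ : x ∈ Ioo 0 π := ⟨hx.1, hx.2.trans hbπ⟩
      have hs : sin x ≠ 0 := (sin_pos_of_pos_of_lt_pi hxπ.1 hxπ.2).ne'
      refine (((hasDerivAt_sin x).mul (((c.hd_phi ht hxr).mul (c.hd2' ht hxπ)).sub
        ((c.hd_psi ht hxr).mul (c.hd ht ⟨by linarith [hx.1, pi_pos], hxπ.2⟩)))).congr_deriv
        ?_).hasDerivWithinAt
      simp only [Pi.sub_apply, Pi.mul_apply]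
      field_simp
      ring
    · intro x hx
      rw [interior_Icc] at hx
      have h1 := hlt x ⟨hx.1.le, hx.2⟩
      have h2 := sin_pos_of_pos_of_lt_pi hx.1 (hx.2.trans hbπ)
      have h3 := (c.hH _ (c.U_pos ht ⟨hx.1.le, hx.2.trans hbr⟩)).2
      have := mul_pos h2 h1
      nlinarith
  have hM : MonotoneOn (fun x => phi U t x / U t x) (Icc 0 b) := by
    apply monotoneOn_of_hasDerivWithinAt_nonneg (convex_Icc 0 b)
      (f' := fun x => (psi U t x * U t x - phi U t x * deriv (U t) x) / U t x ^ 2)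
    · exact hcp.div (c.contU ht hbπ) (fun x hx => (c.U_pos ht ⟨hx.1, hx.2.trans_lt hbr⟩).ne')
    · intro x hx
      rw [interior_Icc] at hx
      have hxr : x ∈ Ioo 0 (r t) := ⟨hx.1, hx.2.trans hbr⟩
      exact ((c.hd_phi ht hxr).div (c.hd ht ⟨by linarith [hx.1, pi_pos], hx.2.trans hbπ⟩)
        (c.U_pos ht ⟨hx.1.le, hxr.2⟩).ne').hasDerivWithinAt
    · intro x hx
      rw [interior_Icc] at hx
      have := hW ⟨le_rfl, hb0⟩ ⟨hx.1.le, hx.2.le⟩ hx.1.le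
      simp only [sin_zero, zero_mul] at this
      have h2 := sin_pos_of_pos_of_lt_pi hx.1 (hx.2.trans hbπ)
      apply div_nonneg _ (sq_nonneg _)
      by_contra h
      push Not at h
      nlinarith
  have := hM ⟨le_rfl, hb0⟩ ⟨hb0, le_rfl⟩ hb0
  simp only [(c.phi_zero ht).1, c.U_zero ht] at this
  have h1 : 0 < 1 / t := by positivity
  have h2 := div_nonpos_of_nonpos_of_nonneg hbphi (c.U_pos ht ⟨hb0, hbr⟩).le
  linarith

lemma D_neg' (c : Ctx f U r) {t ρ : ℝ} (ht : 0 < t) (hρ : ρ ∈ Ioo 0 (r t)) :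
    phi U t ρ * deriv (deriv (U t)) ρ - psi U t ρ * deriv (U t) ρ < 0 := by
  have hρπ := hρ.2.trans (c.rlt ht)
  obtain ⟨hcp, hcs⟩ := c.cont4 ht hρ.1.le hρ.2
  rw [(c.hd2' ht ⟨hρ.1, hρπ⟩).deriv]
  have hW : StrictAntiOn (fun x => -(phi U t x * (cos x * deriv (U t) x))
      - sin x * (phi U t x * f (U t x)) - sin x * (psi U t x * deriv (U t) x)) (Icc 0 ρ) := by
    apply strictAntiOn_of_hasDerivWithinAt_neg (convex_Icc 0 ρ)
      (f' := fun x => phi U t x * deriv (U t) x / sin x)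
    · exact (((hcp.mul (continuous_cos.continuousOn.mul (c.contV ht hρπ))).neg).sub
        (continuous_sin.continuousOn.mul
          (hcp.mul (c.hf.continuous.comp_continuousOn (c.contU ht hρπ))))).sub
        (continuous_sin.continuousOn.mul (hcs.mul (c.contV ht hρπ)))
    · intro x hx
      rw [interior_Icc] at hx
      have hxr : x ∈ Ioo 0 (r t) := ⟨hx.1, hx.2.trans hρ.2⟩
      have hxπ : x ∈ Ioo 0 π := ⟨hx.1, hx.2.trans hρπ⟩
      have hs : sin x ≠ 0 := (sin_pos_of_pos_of_lt_pi hxπ.1 hxπ.2).ne'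
      have dp := c.hd_phi ht hxr
      have ds := c.hd_psi ht hxr
      have dU := c.hd ht (ρ := x) ⟨by linarith [hx.1, pi_pos], hxπ.2⟩
      have dV := c.hd2' ht hxπ
      have df : HasDerivAt (fun x => f (U t x)) (deriv f (U t x) * deriv (U t) x) x :=
        HasDerivAt.comp x ((c.hf.differentiable (by norm_num)) _).hasDerivAt dU
      refine (((((dp.mul ((hasDerivAt_cos x).mul dV)).neg).sub
        ((hasDerivAt_sin x).mul (dp.mul df))).sub
        ((hasDerivAt_sin x).mul (ds.mul dV))).congr_deriv ?_).hasDerivWithinAt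
      simp only [Pi.mul_apply]
      have h1 : cos x ^ 2 = 1 - sin x ^ 2 := by linarith [sin_sq_add_cos_sq x]
      field_simp
      ring_nf
      rw [h1]
      ring
    · intro x hx
      rw [interior_Icc] at hx
      have h1 := c.phi_pos ht (ρ := x) ⟨hx.1.le, hx.2.trans hρ.2⟩
      have h2 := sin_pos_of_pos_of_lt_pi hx.1 (hx.2.trans hρπ)
      have h3 := c.V_neg ht (ρ := x) ⟨hx.1, (hx.2.trans hρ.2).le⟩
      exact div_neg_of_neg_of_pos (mul_neg_of_pos_of_neg h1 h3) h2
  have := hW ⟨le_rfl, hρ.1.le⟩ ⟨hρ.1.le, le_rfl⟩ hρ.1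
  simp only [sin_zero, c.V_zero ht] at this
  have hs := sin_pos_of_pos_of_lt_pi hρ.1 hρπ
  by_contra hcon
  push Not at hcon
  have h1 := mul_nonneg hs.le hcon
  have h2 : sin ρ * (phi U t ρ * (-(cos ρ / sin ρ) * deriv (U t) ρ + -f (U t ρ)) -
      psi U t ρ * deriv (U t) ρ) = -(phi U t ρ * (cos ρ * deriv (U t) ρ))
      - sin ρ * (phi U t ρ * f (U t ρ)) - sin ρ * (psi U t ρ * deriv (U t) ρ) := by
    field_simp; ring
  rw [h2] at h1
  linarith

lemma sinV_est (c : Ctx f U r) {t ρ C ε : ℝ} (ht : 0 < t) (hρ0 : 0 < ρ) (hρ : ρ ≤ π / 2)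
    (hε : 0 ≤ ε)
    (h : ∀ x ∈ Ioo 0 ρ, |f (U t x) - C| ≤ ε) :
    |deriv (U t) ρ / sin ρ + C / (1 + cos ρ)| ≤ ε := by
  have hρπ : ρ < π := by linarith [pi_pos]
  have h1 := monotoneOn_of_hasDerivWithinAt_nonneg (convex_Icc 0 ρ) (c.cont_sinV ht hρπ (C + ε))
    (f' := fun x => sin x * ((C + ε) - f (U t x)))
    (fun x hx => by
      rw [interior_Icc] at hx
      exact (c.hd_sinV ht ⟨hx.1, hx.2.trans hρπ⟩ _).hasDerivWithinAt)
    (fun x hx => by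
      rw [interior_Icc] at hx
      have h2 := sin_pos_of_pos_of_lt_pi hx.1 (hx.2.trans hρπ)
      have h3 := abs_le.1 (h x hx)
      apply mul_nonneg h2.le
      linarith [h3.2])
  have h2 := antitoneOn_of_hasDerivWithinAt_nonpos (convex_Icc 0 ρ) (c.cont_sinV ht hρπ (C - ε))
    (f' := fun x => sin x * ((C - ε) - f (U t x)))
    (fun x hx => by
      rw [interior_Icc] at hx
      exact (c.hd_sinV ht ⟨hx.1, hx.2.trans hρπ⟩ _).hasDerivWithinAt)
    (fun x hx => by
      rw [interior_Icc] at hx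
      have h2 := sin_pos_of_pos_of_lt_pi hx.1 (hx.2.trans hρπ)
      have h3 := abs_le.1 (h x hx)
      apply mul_nonpos_of_nonneg_of_nonpos h2.le
      linarith [h3.1])
  have h1 := h1 ⟨le_rfl, hρ0.le⟩ ⟨hρ0.le, le_rfl⟩ hρ0.le
  have h2 := h2 ⟨le_rfl, hρ0.le⟩ ⟨hρ0.le, le_rfl⟩ hρ0.le
  simp at h1 h2
  have hs := sin_pos_of_pos_of_lt_pi hρ0 hρπ
  have hc : 0 ≤ cos ρ := cos_nonneg_of_mem_Icc ⟨by linarith, hρ⟩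
  have hcs : 1 - cos ρ = sin ρ ^ 2 / (1 + cos ρ) := by
    rw [eq_div_iff (by positivity)]; nlinarith [sin_sq_add_cos_sq ρ]
  have e : deriv (U t) ρ / sin ρ + C / (1 + cos ρ) =
      (sin ρ * deriv (U t) ρ + (1 - cos ρ) * C) / sin ρ ^ 2 := by
    rw [hcs]; field_simp
  have hcc : 1 - cos ρ ≤ sin ρ ^ 2 := by
    rw [hcs, div_le_iff₀ (by positivity)]; nlinarith [sq_nonneg (sin ρ)]
  have hc1 := cos_le_one ρ
  rw [e, abs_div, abs_of_pos (by positivity : 0 < sin ρ ^ 2), div_le_iff₀ (by positivity), abs_le]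
  constructor <;> nlinarith

lemma lip' (c : Ctx f U r) {t R : ℝ} (ht : 0 < t) (hR0 : 0 < R) (hR : R < r t) :
    ∃ K ≥ 0, ∃ η > 0, ∀ s, |s - t| < η → 0 < s ∧ R < r s ∧ ∀ ρ ∈ Icc (-R) R,
      |U s ρ - U t ρ| ≤ K * |s - t| ∧ |deriv (U s) ρ - deriv (U t) ρ| ≤ K * |s - t| := by
  have hRπ := hR.trans (c.rlt ht)
  obtain ⟨K, hK0, hK⟩ := c.lip (t + 1) hRπ
  obtain ⟨η₀, hη₀, -, hN⟩ := c.open_r ht hR0 hR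
  refine ⟨K, hK0, η₀, hη₀, fun s hs => ?_⟩
  obtain ⟨a1, a2, a3⟩ := hN s hs
  refine ⟨a1, a3, fun ρ hρ => ?_⟩
  have H : ∀ ρ ∈ Icc 0 R, _ := fun ρ hρ =>
    hK s t ρ a1 a2 ht (by linarith) hρ (hρ.2.trans a3.le) (hρ.2.trans hR.le)
  rcases le_or_gt 0 ρ with h | h
  · exact H ρ ⟨h, hρ.2⟩
  · have := H (-ρ) ⟨by linarith, by linarith [hρ.1]⟩
    have hρ' : ρ ∈ Ioo (-π) π := ⟨by linarith [hρ.1], by linarith [hρ.2]⟩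
    rw [(c.hU s a1).1.1 ρ hρ', (c.hU t ht).1.1 ρ hρ', c.V_odd a1 hρ', c.V_odd ht hρ'] at this
    refine ⟨this.1, ?_⟩
    rw [← abs_neg]
    convert this.2 using 2
    ring

end Ctx

lemma joint_cont (G : ℝ → ℝ → ℝ) {t ρ R : ℝ} (hρ : ρ ∈ Ioo (-R) R)
    (hc : ContinuousOn (G t) (Icc (-R) R))
    (hu : ∀ ε > 0, ∃ η > 0, ∀ s, |s - t| < η → ∀ ρ ∈ Icc (-R) R, |G s ρ - G t ρ| ≤ ε) :
    ContinuousAt (fun p : ℝ × ℝ => G p.1 p.2) (t, ρ) := by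
  rw [Metric.continuousAt_iff']
  intro ε hε
  obtain ⟨η, hη, h⟩ := hu (ε / 2) (by positivity)
  have hc' : ContinuousAt (G t) ρ := hc.continuousAt (Icc_mem_nhds hρ.1 hρ.2)
  have h1 : ∀ᶠ p : ℝ × ℝ in 𝓝 (t, ρ), |p.1 - t| < η := by
    have : Tendsto (fun p : ℝ × ℝ => p.1) (𝓝 (t, ρ)) (𝓝 t) := continuous_fst.continuousAt
    filter_upwards [this.eventually (Metric.ball_mem_nhds t hη)] with p hp
    simpa [Real.dist_eq] using hp
  have hs : Tendsto (fun p : ℝ × ℝ => p.2) (𝓝 (t, ρ)) (𝓝 ρ) := continuous_snd.continuousAt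
  have h2 := hs.eventually (isOpen_Ioo.mem_nhds hρ)
  have h3 := hs.eventually (Metric.continuousAt_iff'.1 hc' (ε / 2) (by positivity))
  filter_upwards [h1, h2, h3] with p a1 a2 a3
  have := h p.1 a1 p.2 (Ioo_subset_Icc_self a2)
  rw [← Real.dist_eq] at this
  have := dist_triangle (G p.1 p.2) (G t p.2) (G t ρ)
  linarith

namespace Ctx
variable {f : ℝ → ℝ} {U : ℝ → ℝ → ℝ} {r : ℝ → ℝ}

lemma jcU (c : Ctx f U r) {t ρ : ℝ} (ht : 0 < t) (hρ : ρ ∈ Ioo (-r t) (r t)) :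
    ContinuousAt (fun p : ℝ × ℝ => U p.1 p.2) (t, ρ) ∧
    ContinuousAt (fun p : ℝ × ℝ => deriv (U p.1) p.2) (t, ρ) := by
  obtain ⟨R, hR0, hR, hρR⟩ := c.exR ht hρ
  have hRπ := hR.trans (c.rlt ht)
  obtain ⟨K, hK0, η, hη, H⟩ := c.lip' ht hR0 hR
  have key : ∀ ε > 0, ∃ η > 0, ∀ s, |s - t| < η → ∀ ρ ∈ Icc (-R) R, 
      |U s ρ - U t ρ| ≤ ε ∧ |deriv (U s) ρ - deriv (U t) ρ| ≤ ε := by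
    intro ε hε
    refine ⟨min η (ε / (K + 1)), by positivity, fun s hs ρ hρ => ?_⟩
    have h1 := (H s (hs.trans_le (min_le_left _ _))).2.2 ρ hρ
    have h2 := hs.trans_le (min_le_right _ _)
    rw [lt_div_iff₀ (by positivity)] at h2
    have := abs_nonneg (s - t)
    exact ⟨by nlinarith [h1.1], by nlinarith [h1.2]⟩
  constructor
  · refine joint_cont U hρR (fun x hx =>
      (c.hd ht ⟨by linarith [hx.1], by linarith [hx.2]⟩).continuousAt.continuousWithinAt)
      fun ε hε => ?_
    obtain ⟨η, hη, h⟩ := key ε hε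
    exact ⟨η, hη, fun s hs ρ hρ => (h s hs ρ hρ).1⟩
  · refine joint_cont (fun t ρ => deriv (U t) ρ) hρR (fun x hx =>
      (c.hd2 ht ⟨by linarith [hx.1], by linarith [hx.2]⟩).continuousAt.continuousWithinAt)
      fun ε hε => ?_
    obtain ⟨η, hη, h⟩ := key ε hε
    exact ⟨η, hη, fun s hs ρ hρ => (h s hs ρ hρ).2⟩

lemma jcphi (c : Ctx f U r) {t ρ : ℝ} (ht : 0 < t) (hρ : ρ ∈ Ioo (-r t) (r t)) :
    ContinuousAt (fun p : ℝ × ℝ => phi U p.1 p.2) (t, ρ) ∧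
    ContinuousAt (fun p : ℝ × ℝ => psi U p.1 p.2) (t, ρ) := by
  obtain ⟨R, hR0, hR, hρR⟩ := c.exR ht hρ
  obtain ⟨h1, h2⟩ := c.cont_phi ht hR0 hR
  constructor
  · refine joint_cont (phi U) hρR h1 fun ε hε => ?_
    obtain ⟨η, hη, -, h⟩ := c.unif ht hR0 hR hε
    exact ⟨η, hη, fun s hs ρ hρ => (h s hs ρ hρ).1⟩
  · refine joint_cont (psi U) hρR h2 fun ε hε => ?_
    obtain ⟨η, hη, -, h⟩ := c.unif ht hR0 hR hε
    exact ⟨η, hη, fun s hs ρ hρ => (h s hs ρ hρ).2.1⟩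

lemma w_est (c : Ctx f U r) {t₀ : ℝ} (ht : 0 < t₀) {ε : ℝ} (hε : 0 < ε) :
    ∃ η > 0, ∀ t ρ, |t - t₀| < η → 0 < ρ → ρ < η →
      |deriv (deriv (U t)) ρ + f t₀ / 2| ≤ ε := by
  have h0 : (0:ℝ) ∈ Ioo (-r t₀) (r t₀) := ⟨by linarith [c.rpos ht], c.rpos ht⟩
  have hfU : ContinuousAt (fun p : ℝ × ℝ => f (U p.1 p.2)) (t₀, 0) :=
    c.hf.continuous.continuousAt.comp (c.jcU ht h0).1
  obtain ⟨η₁, hη₁, h1⟩ := Metric.continuousAt_iff.1 hfU (ε / 3) (by positivity)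
  have hcos : ContinuousAt (fun x : ℝ => cos x * (f t₀ / (1 + cos x))) 0 := by
    apply ContinuousAt.mul continuous_cos.continuousAt
    apply ContinuousAt.div continuousAt_const (by fun_prop)
    simp
  obtain ⟨η₂, hη₂, h2⟩ := Metric.continuousAt_iff.1 hcos (ε / 3) (by positivity)
  refine ⟨min (min η₁ η₂) (min t₀ (π / 2)), by positivity, fun t ρ htt hρ0 hρ => ?_⟩
  simp only [lt_min_iff] at htt hρ
  obtain ⟨⟨a1, a2⟩, a3, a4⟩ := htt
  obtain ⟨⟨b1, b2⟩, b3, b4⟩ := hρ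
  have ht0 : 0 < t := by linarith [(abs_lt.1 a3).1]
  have H : ∀ x ∈ Ioc 0 ρ, |f (U t x) - f t₀| ≤ ε / 3 := by
    intro x hx
    have := h1 (x := (t, x)) (by
      rw [Prod.dist_eq, Real.dist_eq, Real.dist_eq, sub_zero, abs_of_pos hx.1]
      exact max_lt a1 (hx.2.trans_lt b1))
    simp only [c.U_zero ht, Real.dist_eq] at this
    exact this.le
  have e := c.sinV_est ht0 hρ0 b4.le (by positivity : 0 ≤ ε / 3)
    (fun x hx => H x (Ioo_subset_Ioc_self hx))
  have e2 := h2 (x := ρ) (by rw [Real.dist_eq, sub_zero, abs_of_pos hρ0]; exact b2)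
  simp only [Real.dist_eq, cos_zero] at e2
  have e3 := H ρ ⟨hρ0, le_rfl⟩
  rw [(c.hd2' ht0 ⟨hρ0, by linarith [pi_pos]⟩).deriv]
  have e4 : |cos ρ * (deriv (U t) ρ / sin ρ + f t₀ / (1 + cos ρ))| ≤ ε / 3 := by
    rw [abs_mul]
    have := abs_cos_le_one ρ
    nlinarith [abs_nonneg (cos ρ), abs_nonneg (deriv (U t) ρ / sin ρ + f t₀ / (1 + cos ρ))]
  have e5 : -(cos ρ / sin ρ) * deriv (U t) ρ + -f (U t ρ) + f t₀ / 2 =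
      -(cos ρ * (deriv (U t) ρ / sin ρ + f t₀ / (1 + cos ρ))) +
      (cos ρ * (f t₀ / (1 + cos ρ)) - 1 * (f t₀ / (1 + 1))) - (f (U t ρ) - f t₀) := by
    ring
  rw [e5]
  have e4 := abs_le.1 e4
  have e2 := abs_lt.1 e2
  have e3 := abs_le.1 e3
  rw [abs_le]
  constructor <;> linarith [e2.1, e2.2, e3.1, e3.2, e4.1, e4.2]

lemma w_zero (c : Ctx f U r) {t : ℝ} (ht : 0 < t) : deriv (deriv (U t)) 0 = - f t / 2 := by
  have hcont : ContinuousAt (deriv (deriv (U t))) 0 :=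
    ((c.contDiffOn_deriv ht).continuousOn_deriv_of_isOpen isOpen_Ioo (by norm_num)).continuousAt
      (isOpen_Ioo.mem_nhds ⟨by linarith [pi_pos], pi_pos⟩)
  have h1 : Tendsto (deriv (deriv (U t))) (𝓝[>] 0) (𝓝 (deriv (deriv (U t)) 0)) :=
    hcont.tendsto.mono_left nhdsWithin_le_nhds
  have h2 : Tendsto (deriv (deriv (U t))) (𝓝[>] 0) (𝓝 (-f t / 2)) := by
    rw [Metric.tendsto_nhds]
    intro ε hε
    obtain ⟨η, hη, h⟩ := c.w_est ht (half_pos hε)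
    filter_upwards [Ioo_mem_nhdsGT hη] with x hx
    have := h t x (by simpa) hx.1 hx.2
    rw [Real.dist_eq]
    have e : deriv (deriv (U t)) x - -f t / 2 = deriv (deriv (U t)) x + f t / 2 := by ring
    rw [e]; linarith
  exact tendsto_nhds_unique h1 h2

lemma w_even (c : Ctx f U r) {t ρ : ℝ} (ht : 0 < t) (hρ : ρ ∈ Ioo (-π) π) :
    deriv (deriv (U t)) (-ρ) = deriv (deriv (U t)) ρ := by
  rcases eq_or_ne ρ 0 with rfl | h
  · simp
  have hρ' : -ρ ∈ Ioo (-π) π := ⟨by linarith [hρ.2], by linarith [hρ.1]⟩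
  have h1 := (c.hU t ht).1.2.2 ρ hρ h
  have h2 := (c.hU t ht).1.2.2 (-ρ) hρ' (by simpa)
  rw [c.V_odd ht hρ, (c.hU t ht).1.1 ρ hρ, sin_neg, cos_neg] at h2
  have : cos ρ / -sin ρ * -deriv (U t) ρ = cos ρ / sin ρ * deriv (U t) ρ := by
    rw [div_neg]; ring
  linarith

lemma jcw (c : Ctx f U r) {t ρ : ℝ} (ht : 0 < t) (hρ : ρ ∈ Ioo (-r t) (r t)) :
    ContinuousAt (fun p : ℝ × ℝ => deriv (deriv (U p.1)) p.2) (t, ρ) := by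
  have hρπ : ρ ∈ Ioo (-π) π := ⟨by linarith [hρ.1, c.rlt ht], by linarith [hρ.2, c.rlt ht]⟩
  have hfst : Tendsto (fun p : ℝ × ℝ => p.1) (𝓝 (t, ρ)) (𝓝 t) := continuous_fst.continuousAt
  have hsnd : Tendsto (fun p : ℝ × ℝ => p.2) (𝓝 (t, ρ)) (𝓝 ρ) := continuous_snd.continuousAt
  have hpos := hfst.eventually (Ioi_mem_nhds ht)
  obtain ⟨j1, j2⟩ := c.jcU ht hρ
  rcases eq_or_ne ρ 0 with rfl | h0
  · rw [Metric.continuousAt_iff']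
    intro ε hε
    obtain ⟨η, hη, h⟩ := c.w_est ht (half_pos hε)
    have hff : ∀ᶠ s in 𝓝 t, |f s - f t| < ε := by
      have := Metric.continuousAt_iff'.1 (c.hf.continuous.continuousAt (x := t)) ε hε
      simpa [Real.dist_eq] using this
    filter_upwards [hpos, hfst.eventually (Metric.ball_mem_nhds t hη),
      hsnd.eventually (Metric.ball_mem_nhds 0 hη), hfst.eventually hff,
      hsnd.eventually (isOpen_Ioo.mem_nhds hρπ)] with p p0 p1 p2 p3 p4
    rw [Real.dist_eq] at p1 p2
    rw [sub_zero] at p2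
    rw [Real.dist_eq, c.w_zero ht]
    have e : deriv (deriv (U p.1)) p.2 - -f t / 2 = deriv (deriv (U p.1)) p.2 + f t / 2 := by ring
    rw [e]
    rcases lt_trichotomy p.2 0 with hp | hp | hp
    · rw [← c.w_even p0 p4]
      have := h p.1 (-p.2) p1 (by linarith) (by rwa [abs_of_neg hp] at p2)
      linarith
    · rw [hp, c.w_zero p0]
      have := abs_lt.1 p3
      rw [abs_lt]; constructor <;> linarith [this.1, this.2]
    · have := h p.1 p.2 p1 hp (by rwa [abs_of_pos hp] at p2)
      linarith
  · have hs : sin ρ ≠ 0 := by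
      rcases lt_or_gt_of_ne h0 with h | h
      · exact (sin_neg_of_neg_of_neg_pi_lt h hρπ.1).ne
      · exact (sin_pos_of_pos_of_lt_pi h hρπ.2).ne'
    have hcont : ContinuousAt (fun p : ℝ × ℝ => -(cos p.2 / sin p.2 * deriv (U p.1) p.2)
        - f (U p.1 p.2)) (t, ρ) := by
      apply ContinuousAt.sub
      · apply ContinuousAt.neg
        apply ContinuousAt.mul _ j2
        exact ContinuousAt.div (by fun_prop) (by fun_prop) hs
      · exact c.hf.continuous.continuousAt.comp j1
    refine hcont.congr ?_
    filter_upwards [hpos, hsnd.eventually (isOpen_Ioo.mem_nhds hρπ), hsnd.eventually_ne h0] with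
      p p0 p1 p2
    have := (c.hU p.1 p0).1.2.2 p.2 p1 p2
    linarith

lemma D_neg (c : Ctx f U r) {t ρ : ℝ} (ht : 0 < t) (hρ : ρ ∈ Ioo (-r t) (r t)) :
    phi U t ρ * deriv (deriv (U t)) ρ - psi U t ρ * deriv (U t) ρ < 0 := by
  have hρπ : ρ ∈ Ioo (-π) π := ⟨by linarith [hρ.1, c.rlt ht], by linarith [hρ.2, c.rlt ht]⟩
  rcases lt_trichotomy ρ 0 with h | rfl | h
  · have h1 := c.D_neg' ht (ρ := -ρ) ⟨by linarith, by linarith [hρ.1]⟩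
    rw [c.w_even ht hρπ, c.V_odd ht hρπ] at h1
    have e1 : phi U t (-ρ) = phi U t ρ := by
      apply Filter.EventuallyEq.deriv_eq
      filter_upwards [Ioi_mem_nhds ht] with s hs using (c.hU s hs).1.1 ρ hρπ
    have e2 : psi U t (-ρ) = -psi U t ρ := by
      have : (fun s => deriv (U s) (-ρ)) =ᶠ[𝓝 t] fun s => -deriv (U s) ρ := by
        filter_upwards [Ioi_mem_nhds ht] with s hs using c.V_odd hs hρπ
      rw [psi, this.deriv_eq, deriv.fun_neg, psi]
    rw [e1, e2] at h1
    linarith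
  · rw [(c.phi_zero ht).1, (c.phi_zero ht).2, c.w_zero ht]
    have := (c.hH t ht).1
    linarith
  · exact c.D_neg' ht ⟨h, hρ.2⟩

end Ctx

/-- The domain. -/
def Dl (r : ℝ → ℝ) : Set (ℝ × ℝ) := {p : ℝ × ℝ | 0 < p.1 ∧ -r p.1 < p.2 ∧ p.2 < r p.1}

/-- The map. -/
noncomputable def Fm (U : ℝ → ℝ → ℝ) : ℝ × ℝ → ℝ × ℝ := fun p => (U p.1 p.2, deriv (U p.1) p.2)

/-- The derivative of the map. -/
noncomputable def Lm (U : ℝ → ℝ → ℝ) (p : ℝ × ℝ) : ℝ × ℝ →L[ℝ] ℝ × ℝ :=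
  (ContinuousLinearMap.toSpanSingleton ℝ (phi U p.1 p.2, psi U p.1 p.2)).coprod
    (ContinuousLinearMap.toSpanSingleton ℝ (deriv (U p.1) p.2, deriv (deriv (U p.1)) p.2))

namespace Ctx
variable {f : ℝ → ℝ} {U : ℝ → ℝ → ℝ} {r : ℝ → ℝ}

lemma open_D (c : Ctx f U r) : IsOpen (Dl r) := by
  rw [isOpen_iff_mem_nhds]
  rintro ⟨t, ρ⟩ ⟨ht, hρ⟩
  simp only at ht hρ
  obtain ⟨R, hR0, hR, hρR⟩ := c.exR ht hρ
  obtain ⟨η, hη, -, H⟩ := c.open_r ht hR0 hR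
  have hfst : Tendsto (fun p : ℝ × ℝ => p.1) (𝓝 (t, ρ)) (𝓝 t) := continuous_fst.continuousAt
  have hsnd : Tendsto (fun p : ℝ × ℝ => p.2) (𝓝 (t, ρ)) (𝓝 ρ) := continuous_snd.continuousAt
  filter_upwards [hfst.eventually (Metric.ball_mem_nhds t hη),
    hsnd.eventually (isOpen_Ioo.mem_nhds hρR)] with p h1 h2
  rw [Real.dist_eq] at h1
  obtain ⟨a1, a2, a3⟩ := H p.1 h1
  exact ⟨a1, by linarith [h2.1], by linarith [h2.2]⟩

lemma D_pi (c : Ctx f U r) {p : ℝ × ℝ} (hp : p ∈ Dl r) : p.2 ∈ Ioo (-π) π :=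
  ⟨by linarith [hp.2.1, c.rlt hp.1], by linarith [hp.2.2, c.rlt hp.1]⟩

lemma strictF (c : Ctx f U r) {p : ℝ × ℝ} (hp : p ∈ Dl r) :
    HasStrictFDerivAt (Fm U) (Lm U p) p := by
  have hev := c.open_D.mem_nhds hp
  refine hasStrictFDerivAt_uncurry_coprod (𝕜 := ℝ) (u := p)
    (f := fun t ρ => (U t ρ, deriv (U t) ρ))
    (f₁ := fun t ρ => ContinuousLinearMap.toSpanSingleton ℝ (phi U t ρ, psi U t ρ))
    (f₂ := fun t ρ => ContinuousLinearMap.toSpanSingleton ℝ (deriv (U t) ρ, deriv (deriv (U t)) ρ))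
    ?_ ?_ ?_ ?_
  · filter_upwards [hev] with v hv
    have := c.hd_t hv.1 hv.2
    exact (this.1.prodMk this.2).hasFDerivAt
  · filter_upwards [hev] with v hv
    exact ((c.hd hv.1 (c.D_pi hv)).prodMk (c.hd2 hv.1 (c.D_pi hv))).hasFDerivAt
  · have := c.jcphi hp.1 hp.2
    exact (ContinuousLinearMap.toSpanSingletonCLE (𝕜 := ℝ) (E := ℝ × ℝ)).continuous.continuousAt.comp
      (this.1.prodMk this.2)
  · have := c.jcU hp.1 hp.2
    exact (ContinuousLinearMap.toSpanSingletonCLE (𝕜 := ℝ) (E := ℝ × ℝ)).continuous.continuousAt.comp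
      (this.2.prodMk (c.jcw hp.1 hp.2))

lemma cont_Lm (c : Ctx f U r) {p : ℝ × ℝ} (hp : p ∈ Dl r) : ContinuousAt (Lm U) p := by
  have h1 := c.jcphi hp.1 hp.2
  have h2 := c.jcU hp.1 hp.2
  have e1 : ContinuousAt (fun p : ℝ × ℝ =>
      ContinuousLinearMap.toSpanSingleton ℝ (phi U p.1 p.2, psi U p.1 p.2)) p :=
    (ContinuousLinearMap.toSpanSingletonCLE (𝕜 := ℝ) (E := ℝ × ℝ)).continuous.continuousAt.comp
      (h1.1.prodMk h1.2)
  have e2 : ContinuousAt (fun p : ℝ × ℝ => ContinuousLinearMap.toSpanSingleton ℝ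
      (deriv (U p.1) p.2, deriv (deriv (U p.1)) p.2)) p :=
    (ContinuousLinearMap.toSpanSingletonCLE (𝕜 := ℝ) (E := ℝ × ℝ)).continuous.continuousAt.comp
      (h2.2.prodMk (c.jcw hp.1 hp.2))
  have e3 := (e1.clm_comp (continuousAt_const (y := ContinuousLinearMap.fst ℝ ℝ ℝ))).add
    (e2.clm_comp (continuousAt_const (y := ContinuousLinearMap.snd ℝ ℝ ℝ)))
  refine e3.congr (Eventually.of_forall fun q => ?_)
  ext <;> simp [Lm]

lemma cdF (c : Ctx f U r) {p : ℝ × ℝ} (hp : p ∈ Dl r) : ContDiffAt ℝ 1 (Fm U) p := by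
  rw [contDiffAt_one_iff]
  exact ⟨Lm U, Dl r, c.open_D.mem_nhds hp, fun x hx => (c.cont_Lm hx).continuousWithinAt,
    fun x hx => (c.strictF hx).hasFDerivAt⟩

lemma exL (c : Ctx f U r) {p : ℝ × ℝ} (hp : p ∈ Dl r) :
    ∃ e : (ℝ × ℝ) ≃L[ℝ] (ℝ × ℝ), (e : ℝ × ℝ →L[ℝ] ℝ × ℝ) = Lm U p := by
  have hD := (c.D_neg hp.1 hp.2).ne
  have inj : Function.Injective (Lm U p).toLinearMap := by
    rw [← LinearMap.ker_eq_bot, LinearMap.ker_eq_bot']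
    rintro ⟨a, b⟩ h
    simp [Lm] at h
    obtain ⟨h1, h2⟩ := h
    have ha : a * (phi U p.1 p.2 * deriv (deriv (U p.1)) p.2 - psi U p.1 p.2 * deriv (U p.1) p.2) = 0 := by
      linear_combination deriv (deriv (U p.1)) p.2 * h1 - deriv (U p.1) p.2 * h2
    have hb : b * (phi U p.1 p.2 * deriv (deriv (U p.1)) p.2 - psi U p.1 p.2 * deriv (U p.1) p.2) = 0 := by
      linear_combination phi U p.1 p.2 * h2 - psi U p.1 p.2 * h1
    rw [(mul_eq_zero_iff_right hD).1 ha, (mul_eq_zero_iff_right hD).1 hb]; rfl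
  refine ⟨(LinearEquiv.ofInjectiveEndo _ inj).toContinuousLinearEquiv, ?_⟩
  ext <;> simp

/-- local inverse -/
lemma locinv (c : Ctx f U r) {p : ℝ × ℝ} (hp : p ∈ Dl r) :
    ∃ g : ℝ × ℝ → ℝ × ℝ, ContDiffAt ℝ 1 g (Fm U p) ∧
      ∀ᶠ q in 𝓝 (Fm U p), g q ∈ Dl r ∧ Fm U (g q) = q := by
  obtain ⟨e, he⟩ := c.exL hp
  have hF : HasFDerivAt (Fm U) (e : ℝ × ℝ →L[ℝ] ℝ × ℝ) p := he ▸ (c.strictF hp).hasFDerivAt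
  have hS : HasStrictFDerivAt (Fm U) (e : ℝ × ℝ →L[ℝ] ℝ × ℝ) p := he ▸ (c.strictF hp)
  have h1 := (c.cdF hp).to_localInverse hF one_ne_zero
  refine ⟨_, h1, ?_⟩
  have h2 := h1.continuousAt
  have h3 := (c.cdF hp).localInverse_apply_image hF one_ne_zero
  have h4 := h2.eventually (h3.symm ▸ c.open_D.mem_nhds hp)
  have h5 := hS.eventually_right_inverse
  filter_upwards [h4, h5] with q a b using ⟨a, b⟩

end Ctx

namespace Ctx
variable {f : ℝ → ℝ} {U : ℝ → ℝ → ℝ} {r : ℝ → ℝ}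

lemma ex_rho (c : Ctx f U r) {t x : ℝ} (hx : 0 < x) (ht : x < t) :
    ∃ ρ ∈ Ioo 0 (r t), U t ρ = x := by
  have ht0 := hx.trans ht
  have h := intermediate_value_Ioo' (c.rpos ht0).le (c.contU ht0 (c.rlt ht0))
  rw [c.U_zero ht0, (c.hU t ht0).2.2.2.1] at h
  obtain ⟨ρ, h1, h2⟩ := h ⟨hx, ht⟩
  exact ⟨ρ, h1, h2⟩

/-- strict derivative of the first component, along the implicit curve -/
lemma curve (c : Ctx f U r) {x : ℝ} (R : ℝ → ℝ) (hx : 0 < x)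
    (hR : ∀ t, x < t → R t ∈ Ioo 0 (r t) ∧ U t (R t) = x) {t : ℝ} (ht : x < t) :
    ∃ d, HasDerivAt R d t ∧ phi U t (R t) + deriv (U t) (R t) * d = 0 := by
  have ht0 := hx.trans ht
  obtain ⟨⟨h1, h2⟩, h3⟩ := hR t ht
  have hp : ((t, R t) : ℝ × ℝ) ∈ Dl r := ⟨ht0, by simp only; linarith, h2⟩
  have hV := c.V_neg ht0 (ρ := R t) ⟨h1, h2.le⟩
  have hS := c.strictF hp
  have hS1 : HasStrictFDerivAt (fun p : ℝ × ℝ => U p.1 p.2)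
      ((ContinuousLinearMap.fst ℝ ℝ ℝ) ∘L Lm U (t, R t)) (t, R t) :=
    (ContinuousLinearMap.fst ℝ ℝ ℝ).hasStrictFDerivAt.comp (t, R t) hS
  have inv : (((ContinuousLinearMap.fst ℝ ℝ ℝ) ∘L Lm U (t, R t)) ∘L
      ContinuousLinearMap.inr ℝ ℝ ℝ).IsInvertible := by
    refine ⟨ContinuousLinearEquiv.unitsEquivAut ℝ (Units.mk0 _ hV.ne), ?_⟩
    ext
    simp [Lm]
  have t1 := hS1.tendsto_implicitFunctionOfProdDomain inv
  have t2 := hS1.eventually_apply_implicitFunctionOfProdDomain inv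
  have t3 := hS1.hasStrictFDerivAt_implicitFunctionOfProdDomain inv
  set ψ := hS1.implicitFunctionOfProdDomain inv
  simp only at t1 t2 t3
  have t4 : Tendsto (fun s => (s, ψ s)) (𝓝 t) (𝓝 (t, R t)) := tendsto_id.prodMk_nhds t1
  have e : ψ =ᶠ[𝓝 t] R := by
    filter_upwards [t2, t4.eventually (c.open_D.mem_nhds hp), t1.eventually (Ioi_mem_nhds h1),
      Ioi_mem_nhds ht] with s a1 a2 a3 a4
    have hs0 : 0 < s := hx.trans a4
    obtain ⟨b1, b2⟩ := hR s a4
    refine (c.U_anti hs0).injOn ⟨le_of_lt a3, a2.2.2.le⟩ ⟨b1.1.le, b1.2.le⟩ ?_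
    rw [a1, b2, h3]
  have dψ := t3.hasFDerivAt.differentiableAt.hasDerivAt
  refine ⟨deriv ψ t, dψ.congr_of_eventuallyEq e.symm, ?_⟩
  have e0 := e.self_of_nhds
  have d1 : HasDerivAt (fun s => (s, ψ s)) (1, deriv ψ t) t := (hasDerivAt_id t).prodMk dψ
  have hS2 := hS1.hasFDerivAt
  rw [← e0] at hS2
  have d2 : HasDerivAt (fun s => U s (ψ s))
      (((ContinuousLinearMap.fst ℝ ℝ ℝ) ∘L Lm U (t, ψ t)) (1, deriv ψ t)) t :=
    HasFDerivAt.comp_hasDerivAt (l := fun p : ℝ × ℝ => U p.1 p.2) t hS2 d1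
  rw [e0] at d2
  have d3 : HasDerivAt (fun s => U s (ψ s)) 0 t :=
    (hasDerivAt_const t (U t (R t))).congr_of_eventuallyEq (t2.mono fun s hs => hs)
  have := d2.unique d3
  simp [Lm] at this
  linarith

lemma Yderiv (c : Ctx f U r) {x : ℝ} (R : ℝ → ℝ) (hx : 0 < x)
    (hR : ∀ t, x < t → R t ∈ Ioo 0 (r t) ∧ U t (R t) = x) {t : ℝ} (ht : x < t) :
    ∃ d < 0, HasDerivAt (fun s => deriv (U s) (R s)) d t := by
  have ht0 := hx.trans ht
  obtain ⟨⟨h1, h2⟩, h3⟩ := hR t ht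
  have hp : ((t, R t) : ℝ × ℝ) ∈ Dl r := ⟨ht0, by simp only; linarith, h2⟩
  have hV := c.V_neg ht0 (ρ := R t) ⟨h1, h2.le⟩
  obtain ⟨d, hd, hd0⟩ := c.curve R hx hR ht
  have hS1 : HasFDerivAt (fun p : ℝ × ℝ => deriv (U p.1) p.2)
      ((ContinuousLinearMap.snd ℝ ℝ ℝ) ∘L Lm U (t, R t)) (t, R t) :=
    (ContinuousLinearMap.snd ℝ ℝ ℝ).hasFDerivAt.comp (t, R t) (c.strictF hp).hasFDerivAt
  have d1 : HasDerivAt (fun s => (s, R s)) (1, d) t := (hasDerivAt_id t).prodMk hd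
  have d2 : HasDerivAt (fun s => deriv (U s) (R s))
      (((ContinuousLinearMap.snd ℝ ℝ ℝ) ∘L Lm U (t, R t)) (1, d)) t :=
    HasFDerivAt.comp_hasDerivAt (l := fun p : ℝ × ℝ => deriv (U p.1) p.2) t hS1 d1
  refine ⟨_, ?_, d2⟩
  simp [Lm]
  have hD := c.D_neg ht0 hp.2
  simp only at hD
  by_contra hcon
  push Not at hcon
  have := mul_nonneg_of_nonpos_of_nonpos hV.le (neg_nonpos.2 hcon)
  have e : deriv (U t) (R t) * -(psi U t (R t) + d * deriv (deriv (U t)) (R t)) =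
    phi U t (R t) * deriv (deriv (U t)) (R t) - psi U t (R t) * deriv (U t) (R t) := by
    linear_combination (-deriv (deriv (U t)) (R t)) * hd0
  linarith

lemma Yanti (c : Ctx f U r) {x : ℝ} (R : ℝ → ℝ) (hx : 0 < x)
    (hR : ∀ t, x < t → R t ∈ Ioo 0 (r t) ∧ U t (R t) = x) :
    ContinuousOn (fun s => deriv (U s) (R s)) (Ioi x) ∧
    StrictAntiOn (fun s => deriv (U s) (R s)) (Ioi x) := by
  have hc : ContinuousOn (fun s => deriv (U s) (R s)) (Ioi x) := fun t ht => by
    obtain ⟨d, -, h⟩ := c.Yderiv R hx hR ht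
    exact h.continuousAt.continuousWithinAt
  refine ⟨hc, strictAntiOn_of_deriv_neg (convex_Ioi x) hc fun t ht => ?_⟩
  rw [interior_Ioi] at ht
  obtain ⟨d, h0, h⟩ := c.Yderiv R hx hR ht
  rwa [h.deriv]

lemma exRfun (c : Ctx f U r) {x : ℝ} (hx : 0 < x) :
    ∃ R : ℝ → ℝ, ∀ t, x < t → R t ∈ Ioo 0 (r t) ∧ U t (R t) = x := by
  have : ∀ t, ∃ ρ, x < t → ρ ∈ Ioo 0 (r t) ∧ U t ρ = x := by
    intro t
    by_cases h : x < t
    · obtain ⟨ρ, h1, h2⟩ := c.ex_rho hx h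
      exact ⟨ρ, fun _ => ⟨h1, h2⟩⟩
    · exact ⟨0, fun h' => absurd h' h⟩
  choose R hR using this
  exact ⟨R, hR⟩

lemma Upos' (c : Ctx f U r) {p : ℝ × ℝ} (hp : p ∈ Dl r) : 0 < U p.1 p.2 := by
  rcases le_total 0 p.2 with h | h
  · exact c.U_pos hp.1 ⟨h, hp.2.2⟩
  · rw [← (c.hU p.1 hp.1).1.1 p.2 (c.D_pi hp)]
    exact c.U_pos hp.1 ⟨by linarith, by linarith [hp.2.1]⟩

lemma lt_of_pos (c : Ctx f U r) {t ρ : ℝ} (ht : 0 < t) (hρ : ρ ∈ Ioo 0 (r t)) : U t ρ < t := by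
  have := c.U_anti ht ⟨le_rfl, (c.rpos ht).le⟩ ⟨hρ.1.le, hρ.2.le⟩ hρ.1
  rwa [c.U_zero ht] at this

lemma inj_pos (c : Ctx f U r) {t s ρ σ : ℝ} (ht : 0 < t) (hs : 0 < s) (hρ : ρ ∈ Ioo 0 (r t))
    (hσ : σ ∈ Ioo 0 (r s)) (h1 : U t ρ = U s σ) (h2 : deriv (U t) ρ = deriv (U s) σ) :
    t = s ∧ ρ = σ := by
  have hx := c.U_pos ht ⟨hρ.1.le, hρ.2⟩
  have l1 := c.lt_of_pos ht hρ
  have l2 := c.lt_of_pos hs hσ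
  rw [← h1] at l2
  obtain ⟨R, hR⟩ := c.exRfun hx
  obtain ⟨-, hY⟩ := c.Yanti R hx hR
  have e1 : R t = ρ := (c.U_anti ht).injOn ⟨(hR t l1).1.1.le, (hR t l1).1.2.le⟩
    ⟨hρ.1.le, hρ.2.le⟩ (hR t l1).2
  have e2 : R s = σ := (c.U_anti hs).injOn ⟨(hR s l2).1.1.le, (hR s l2).1.2.le⟩
    ⟨hσ.1.le, hσ.2.le⟩ ((hR s l2).2.trans h1)
  have : t = s := hY.injOn l1 l2 (by simp only [e1, e2, h2])
  exact ⟨this, by rw [← e1, ← e2, this]⟩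

lemma sign_V (c : Ctx f U r) {p : ℝ × ℝ} (hp : p ∈ Dl r) :
    (0 < p.2 ∧ deriv (U p.1) p.2 < 0) ∨ (p.2 = 0 ∧ deriv (U p.1) p.2 = 0) ∨
    (p.2 < 0 ∧ 0 < deriv (U p.1) p.2) := by
  rcases lt_trichotomy p.2 0 with h | h | h
  · right; right
    have h1 := c.V_odd hp.1 (c.D_pi hp)
    have h2 := c.V_neg hp.1 (ρ := -p.2) ⟨by linarith, by linarith [hp.2.1]⟩
    exact ⟨h, by linarith⟩
  · right; left
    exact ⟨h, by rw [h]; exact c.V_zero hp.1⟩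
  · left
    exact ⟨h, c.V_neg hp.1 ⟨h, hp.2.2.le⟩⟩

lemma inj (c : Ctx f U r) : InjOn (Fm U) (Dl r) := by
  intro p hp q hq h
  have h1 : U p.1 p.2 = U q.1 q.2 := congrArg Prod.fst h
  have h2 : deriv (U p.1) p.2 = deriv (U q.1) q.2 := congrArg Prod.snd h
  rcases c.sign_V hp with ⟨a1, a2⟩ | ⟨a1, a2⟩ | ⟨a1, a2⟩ <;>
  rcases c.sign_V hq with ⟨b1, b2⟩ | ⟨b1, b2⟩ | ⟨b1, b2⟩
  · obtain ⟨e1, e2⟩ := c.inj_pos hp.1 hq.1 ⟨a1, hp.2.2⟩ ⟨b1, hq.2.2⟩ h1 h2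
    exact Prod.ext e1 e2
  · linarith
  · linarith
  · linarith
  · rw [a1, b1, c.U_zero hp.1, c.U_zero hq.1] at h1
    exact Prod.ext h1 (a1.trans b1.symm)
  · linarith
  · linarith
  · linarith
  · obtain ⟨e1, e2⟩ := c.inj_pos hp.1 hq.1 (ρ := -p.2) (σ := -q.2)
      ⟨by linarith, by linarith [hp.2.1]⟩ ⟨by linarith, by linarith [hq.2.1]⟩
      (by rw [(c.hU p.1 hp.1).1.1 p.2 (c.D_pi hp), (c.hU q.1 hq.1).1.1 q.2 (c.D_pi hq), h1])
      (by rw [c.V_odd hp.1 (c.D_pi hp), c.V_odd hq.1 (c.D_pi hq), h2])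
    exact Prod.ext e1 (neg_injective e2)

end Ctx

namespace Ctx
variable {f : ℝ → ℝ} {U : ℝ → ℝ → ℝ} {r : ℝ → ℝ}

lemma f_growth (c : Ctx f U r) : ∃ K > 0, ∀ u > 0, f u ≤ K * (1 + u) := by
  obtain ⟨M, hM⟩ := (isCompact_Icc (a := (0:ℝ)) (b := 1)).bddAbove_image c.hf.continuous.continuousOn
  have hM' : ∀ u ∈ Icc (0:ℝ) 1, f u ≤ M := fun u hu => hM ⟨u, hu, rfl⟩
  have h1 := (c.hH 1 one_pos).1
  have hM1 : f 1 ≤ M := hM' 1 ⟨zero_le_one, le_rfl⟩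
  refine ⟨M, by linarith, fun u hu => ?_⟩
  rcases le_total u 1 with h | h
  · have := hM' u ⟨hu.le, h⟩
    nlinarith
  · have ha : AntitoneOn (fun x => f x / x) (Ici 1) := by
      have hd : ∀ x ∈ Ici (1:ℝ), HasDerivAt (fun x => f x / x)
          ((deriv f x * x - f x * 1) / x ^ 2) x := fun x hx =>
        ((c.hf.differentiable (by norm_num)) x).hasDerivAt.div (hasDerivAt_id x)
          (by have : (1:ℝ) ≤ x := hx
              exact (lt_of_lt_of_le one_pos this).ne')
      apply antitoneOn_of_hasDerivWithinAt_nonpos (convex_Ici 1)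
        (f' := fun x => (deriv f x * x - f x * 1) / x ^ 2)
      · exact fun x hx => (hd x hx).continuousAt.continuousWithinAt
      · exact fun x hx => (hd x (interior_subset hx)).hasDerivWithinAt
      · intro x hx
        have hx1 : (1:ℝ) ≤ x := interior_subset hx
        have := (c.hH x (by linarith)).2
        exact div_nonpos_of_nonpos_of_nonneg (by linarith) (by positivity)
    have := ha (mem_Ici.2 le_rfl) (mem_Ici.2 h) h
    simp only [div_one] at this
    rw [div_le_iff₀ hu] at this
    nlinarith

lemma U_lower (c : Ctx f U r) {K : ℝ} (hK0 : 0 < K) (hK : ∀ u > 0, f u ≤ K * (1 + u)) {t ρ : ℝ}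
    (ht : 1 ≤ t) (hρ : ρ ∈ Ioo 0 (r t)) (hρ2 : ρ ≤ π / 2) : t - 2 * K * t * ρ ≤ U t ρ := by
  have ht0 : 0 < t := by linarith
  set C := 2 * K * t
  have hC0 : 0 ≤ C := by positivity
  have hfC : ∀ x ∈ Ioo 0 (r t), f (U t x) ≤ C := by
    intro x hx
    have h1 := hK _ (c.U_pos ht0 ⟨hx.1.le, hx.2⟩)
    have h2 := c.U_le ht0 (ρ := x) ⟨hx.1.le, hx.2.le⟩
    have : K * (1 + U t x) ≤ K * (t + t) := by gcongr
    simp only [C]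
    linarith
  have hV : ∀ x ∈ Ioo 0 ρ, -C ≤ deriv (U t) x := by
    intro x hx
    have hxr := hx.2.trans hρ.2
    have hxπ := hxr.trans (c.rlt ht0)
    have hm : MonotoneOn (fun y => sin y * deriv (U t) y + (1 - cos y) * C) (Icc 0 x) := by
      apply monotoneOn_of_hasDerivWithinAt_nonneg (convex_Icc 0 x)
        (f' := fun y => sin y * (C - f (U t y)))
      · exact c.cont_sinV ht0 hxπ C
      · intro y hy
        rw [interior_Icc] at hy
        exact (c.hd_sinV ht0 ⟨hy.1, hy.2.trans hxπ⟩ C).hasDerivWithinAt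
      · intro y hy
        rw [interior_Icc] at hy
        exact mul_nonneg (sin_pos_of_pos_of_lt_pi hy.1 (hy.2.trans hxπ)).le
          (by linarith [hfC y ⟨hy.1, hy.2.trans hxr⟩])
    have h := hm ⟨le_rfl, hx.1.le⟩ ⟨hx.1.le, le_rfl⟩ hx.1.le
    simp only [sin_zero, cos_zero, zero_mul, sub_self, add_zero] at h
    have hs := sin_pos_of_pos_of_lt_pi hx.1 hxπ
    have hco : 0 ≤ cos x := cos_nonneg_of_mem_Icc ⟨by linarith [hx.1, pi_pos], by linarith [hx.2]⟩
    have hsc : 1 - cos x ≤ sin x := by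
      nlinarith [sin_sq_add_cos_sq x, mul_nonneg hs.le hco]
    by_contra hcon
    push Not at hcon
    nlinarith [mul_le_mul_of_nonneg_right hsc hC0, mul_lt_mul_of_pos_left hcon hs]
  have hm : MonotoneOn (fun y => U t y + C * y) (Icc 0 ρ) := by
    apply monotoneOn_of_hasDerivWithinAt_nonneg (convex_Icc 0 ρ)
      (f' := fun y => deriv (U t) y + C * 1)
    · exact (c.contU ht0 (hρ.2.trans (c.rlt ht0))).add (by fun_prop)
    · intro y hy
      rw [interior_Icc] at hy
      exact ((c.hd ht0 ⟨by linarith [hy.1, pi_pos], by linarith [hy.2, hρ.2, c.rlt ht0]⟩).add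
        ((hasDerivAt_id y).const_mul C)).hasDerivWithinAt
    · intro y hy
      rw [interior_Icc] at hy
      linarith [hV y hy]
  have h := hm ⟨le_rfl, hρ.1.le⟩ ⟨hρ.1.le, le_rfl⟩ hρ.1.le
  simp only [c.U_zero ht0, mul_zero, add_zero] at h
  linarith

lemma back (c : Ctx f U r) {K : ℝ} (hK0 : 0 < K) (hK : ∀ u > 0, f u ≤ K * (1 + u)) {t δ ρ : ℝ}
    (ht0 : 0 < t) (hδ : 0 < δ) (hδ2 : δ ≤ π / 2) (hδρ : δ ≤ ρ) (hρ : ρ < r t) :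
    U t δ ^ 2 ≤ exp ((2 * (1 / sin δ) + K + 2) * π) * (U t ρ ^ 2 + deriv (U t) ρ ^ 2 + K ^ 2) := by
  have hρπ := hρ.trans (c.rlt ht0)
  have hsδ : 0 < sin δ := sin_pos_of_pos_of_lt_pi hδ (by linarith)
  have hmaps : MapsTo (fun s : ℝ => -s) (Icc (-ρ) (-δ)) (Icc 0 ρ) := fun s hs =>
    ⟨by simp only; linarith [hs.2], by simp only; linarith [hs.1]⟩
  have := energy (a := -ρ) (b := -δ) (κ := 1 / sin δ) (A := K) (B := K) (by positivity) hK0.le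
    (fun s => U t (-s)) (fun s => -deriv (U t) (-s)) (fun s => -(cos (-s) / sin (-s)))
    (fun s => -f (U t (-s))) (by linarith)
    ((c.contU ht0 hρπ).comp continuous_neg.continuousOn hmaps)
    ((c.contV ht0 hρπ).comp continuous_neg.continuousOn hmaps).neg ?_ ?_ ?_ ?_
  · simp only [neg_neg] at this
    have h1 : exp ((2 * (1 / sin δ) + K + 2) * (-δ - -ρ)) ≤ exp ((2 * (1 / sin δ) + K + 2) * π) := by
      apply exp_le_exp.2
      apply mul_le_mul_of_nonneg_left (by linarith)
      positivity
    have h2 : 0 ≤ U t ρ ^ 2 + deriv (U t) ρ ^ 2 + K ^ 2 := by positivity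
    have h3 := mul_le_mul_of_nonneg_right h1 h2
    simp only [neg_sq] at this
    nlinarith [sq_nonneg (deriv (U t) δ)]
  · intro x hx
    have h := c.hd ht0 (ρ := -x) ⟨by linarith [hx.2, pi_pos], by linarith [hx.1]⟩
    refine (HasDerivAt.scomp x h (hasDerivAt_neg x)).congr_deriv ?_
    simp
  · intro x hx
    have h := c.hd2' ht0 (ρ := -x) ⟨by linarith [hx.2], by linarith [hx.1]⟩
    refine (HasDerivAt.scomp x h (hasDerivAt_neg x)).neg.congr_deriv ?_
    simp only [smul_eq_mul]
    ring
  · intro x hx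
    have hs : sin δ ≤ sin (-x) ∨ cos (-x) ≤ 0 := by
      rcases le_total (-x) (π / 2) with h | h
      · left
        exact sin_le_sin_of_le_of_le_pi_div_two (by linarith [pi_pos]) h (by linarith [hx.2])
      · right
        exact cos_nonpos_of_pi_div_two_le_of_le h (by linarith [hx.1, pi_pos])
    have hsp : 0 < sin (-x) := sin_pos_of_pos_of_lt_pi (by linarith [hx.2]) (by linarith [hx.1])
    have hk : 0 < 1 / sin δ := by positivity
    apply neg_le_neg
    rcases hs with h | h
    · exact div_le_div₀ zero_le_one (cos_le_one _) hsδ h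
    · exact (div_nonpos_of_nonpos_of_nonneg h hsp.le).trans hk.le
  · intro x hx
    have hu := c.U_pos ht0 (ρ := -x) ⟨by linarith [hx.2], by linarith [hx.1]⟩
    rw [abs_neg, abs_of_pos (c.hH _ hu).1, abs_of_pos hu]
    linarith [hK _ hu]

lemma unbdd (c : Ctx f U r) {x : ℝ} (R : ℝ → ℝ) (hx : 0 < x)
    (hR : ∀ t, x < t → R t ∈ Ioo 0 (r t) ∧ U t (R t) = x) (y : ℝ) :
    ∃ t, x < t ∧ deriv (U t) (R t) < y := by
  obtain ⟨K, hK0, hK⟩ := c.f_growth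
  set δ := min (π / 2) (1 / (4 * K)) with hδ
  have hδ0 : 0 < δ := by have := pi_pos; positivity
  have hδ2 : δ ≤ π / 2 := min_le_left _ _
  have hδK : 4 * K * δ ≤ 1 := by
    have : δ ≤ 1 / (4 * K) := min_le_right _ _
    rw [le_div_iff₀ (by positivity)] at this
    linarith
  by_contra hcon
  push Not at hcon
  set E := exp ((2 * (1 / sin δ) + K + 2) * π)
  have hE : 0 < E := exp_pos _
  set B := 4 * (E * (x ^ 2 + y ^ 2 + K ^ 2))
  have hB : 0 ≤ B := by positivity
  set t := 2 * x + 1 + B with htdef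
  have hxt : x < t := by linarith
  have ht0 : 0 < t := by linarith
  obtain ⟨hr, hUx⟩ := hR t hxt
  have hlow : ∀ ρ ∈ Ioo 0 (r t), ρ ≤ δ → t / 2 ≤ U t ρ := by
    intro ρ hρ hρδ
    have := c.U_lower hK0 hK (by linarith) hρ (hρδ.trans hδ2)
    have h2 : 4 * K * ρ ≤ 1 := (by gcongr : 4 * K * ρ ≤ 4 * K * δ).trans hδK
    nlinarith
  have hδR : δ ≤ R t := by
    by_contra h
    push Not at h
    have := hlow _ hr h.le
    linarith
  have h1 := c.back hK0 hK ht0 hδ0 hδ2 hδR hr.2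
  have h2 := hlow δ ⟨hδ0, hδR.trans_lt hr.2⟩ le_rfl
  have h3 := c.V_neg ht0 ⟨hr.1, hr.2.le⟩
  have h4 := hcon t hxt
  rw [hUx] at h1
  have h5 : deriv (U t) (R t) ^ 2 ≤ y ^ 2 := by nlinarith
  have h6 : E * (x ^ 2 + deriv (U t) (R t) ^ 2 + K ^ 2) ≤ E * (x ^ 2 + y ^ 2 + K ^ 2) := by gcongr
  have h7 : t ^ 2 ≤ B := by
    have : (t / 2) ^ 2 ≤ U t δ ^ 2 := by gcongr
    simp only [B]
    linarith
  nlinarith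

lemma surj_neg (c : Ctx f U r) {x y : ℝ} (hx : 0 < x) (hy : y < 0) :
    ∃ t ρ, 0 < t ∧ ρ ∈ Ioo 0 (r t) ∧ U t ρ = x ∧ deriv (U t) ρ = y := by
  obtain ⟨R, hR⟩ := c.exRfun hx
  obtain ⟨t₁, ht₁, h₁⟩ := c.unbdd R hx hR y
  have hp : ((x, 0) : ℝ × ℝ) ∈ Dl r := ⟨hx, by simpa using c.rpos hx, c.rpos hx⟩
  obtain ⟨g, -, hg⟩ := c.locinv hp
  have e : Fm U (x, 0) = (x, 0) := by simp [Fm, c.U_zero hx, c.V_zero hx]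
  rw [e] at hg
  have hten : Tendsto (fun s : ℝ => ((x, s) : ℝ × ℝ)) (𝓝[<] 0) (𝓝 (x, 0)) :=
    (tendsto_const_nhds.prodMk_nhds tendsto_id).mono_left nhdsWithin_le_nhds
  obtain ⟨s, ⟨hs1, hs2⟩, hs3⟩ := ((hten.eventually hg).and (Ioo_mem_nhdsLT hy)).exists
  have a1 : U (g (x, s)).1 (g (x, s)).2 = x := congrArg Prod.fst hs2
  have a2 : deriv (U (g (x, s)).1) (g (x, s)).2 = s := congrArg Prod.snd hs2
  have hpos : 0 < (g (x, s)).2 := by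
    rcases c.sign_V hs1 with h | h | h
    · exact h.1
    · linarith [h.2, hs3.2]
    · linarith [h.2, hs3.2]
  set t₀ := (g (x, s)).1
  have h0r : (g (x, s)).2 ∈ Ioo 0 (r t₀) := ⟨hpos, hs1.2.2⟩
  have ht₀ : x < t₀ := a1 ▸ c.lt_of_pos hs1.1 h0r
  have e0 : R t₀ = (g (x, s)).2 := (c.U_anti hs1.1).injOn
    ⟨(hR _ ht₀).1.1.le, (hR _ ht₀).1.2.le⟩ ⟨h0r.1.le, h0r.2.le⟩ ((hR _ ht₀).2.trans a1.symm)
  obtain ⟨hc, -⟩ := c.Yanti R hx hR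
  have hiv := isPreconnected_Ioi.intermediate_value (mem_Ioi.2 ht₁) (mem_Ioi.2 ht₀) hc
  obtain ⟨t, ht, hty⟩ := hiv (show y ∈ _ from ⟨h₁.le, by simp only [e0, a2]; exact hs3.1.le⟩)
  exact ⟨t, R t, hx.trans ht, (hR t ht).1, (hR t ht).2, hty⟩

lemma surj (c : Ctx f U r) : SurjOn (Fm U) (Dl r) (Ioi 0 ×ˢ univ) := by
  rintro ⟨x, y⟩ ⟨hx, -⟩
  replace hx : 0 < x := hx
  rcases lt_trichotomy y 0 with h | h | h
  · obtain ⟨t, ρ, ht, hρ, h1, h2⟩ := c.surj_neg hx h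
    exact ⟨(t, ρ), ⟨ht, by simp only; linarith [hρ.1, c.rpos ht], hρ.2⟩, by simp [Fm, h1, h2]⟩
  · exact ⟨(x, 0), ⟨hx, by simpa using c.rpos hx, c.rpos hx⟩,
      by simp [Fm, c.U_zero hx, c.V_zero hx, h]⟩
  · obtain ⟨t, ρ, ht, hρ, h1, h2⟩ := c.surj_neg hx (neg_lt_zero.2 h)
    have hm : ((t, -ρ) : ℝ × ℝ) ∈ Dl r :=
      ⟨ht, by simp only; linarith [hρ.2], by simp only; linarith [hρ.1, c.rpos ht]⟩
    have hρπ : ρ ∈ Ioo (-π) π := ⟨by linarith [hρ.1, pi_pos], by linarith [hρ.2, c.rlt ht]⟩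
    refine ⟨(t, -ρ), hm, ?_⟩
    simp only [Fm]
    rw [(c.hU t ht).1.1 ρ hρπ, c.V_odd ht hρπ, h1, h2, neg_neg]

lemma main (c : Ctx f U r) : BijOn (Fm U) (Dl r) (Ioi 0 ×ˢ univ) ∧
    ContDiffOn ℝ 1 (Fm U) (Dl r) ∧
    ∃ G : ℝ × ℝ → ℝ × ℝ, ContDiffOn ℝ 1 G (Ioi 0 ×ˢ (univ : Set ℝ)) ∧
      ∀ p ∈ Dl r, G (Fm U p) = p := by
  have hl := c.inj.leftInvOn_invFunOn
  refine ⟨⟨fun p hp => ⟨c.Upos' hp, mem_univ _⟩, c.inj, c.surj⟩,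
    fun p hp => (c.cdF hp).contDiffWithinAt, Function.invFunOn (Fm U) (Dl r), ?_,
    fun p hp => hl hp⟩
  intro q hq
  obtain ⟨p, hp, rfl⟩ := c.surj hq
  obtain ⟨g, hg, hev⟩ := c.locinv hp
  refine (hg.congr_of_eventuallyEq ?_).contDiffWithinAt
  filter_upwards [hev] with q h
  have := hl h.1
  rwa [h.2] at this

end Ctx


end Helpers

/-- Under hypothesis (H), the map `F(t,ρ) = (U_t(ρ), U_t'(ρ))` is a bijection (indeed a
`C¹` diffeomorphism) from `Δ = {(t,ρ) : t > 0, -r_t < ρ < r_t}` onto `(0,∞) × ℝ`. -/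
theorem stmt11 (f : ℝ → ℝ) (hf : ContDiff ℝ 1 f)
    (hH : ∀ x > (0:ℝ), 0 < f x ∧ x * deriv f x ≤ f x)
    (U : ℝ → ℝ → ℝ) (r : ℝ → ℝ)
    (hU : ∀ t > (0:ℝ), IsEvenSol f (U t) ∧ U t 0 = t ∧
      r t ∈ Set.Ioo 0 Real.pi ∧ U t (r t) = 0 ∧ ∀ ρ ∈ Set.Ioo 0 (r t), U t ρ ≠ 0) :
    Set.BijOn (fun p : ℝ × ℝ => (U p.1 p.2, deriv (U p.1) p.2))
      {p : ℝ × ℝ | 0 < p.1 ∧ -r p.1 < p.2 ∧ p.2 < r p.1}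
      (Set.Ioi 0 ×ˢ Set.univ) ∧
    ContDiffOn ℝ 1 (fun p : ℝ × ℝ => (U p.1 p.2, deriv (U p.1) p.2))
      {p : ℝ × ℝ | 0 < p.1 ∧ -r p.1 < p.2 ∧ p.2 < r p.1} ∧
    ∃ G : ℝ × ℝ → ℝ × ℝ,
      ContDiffOn ℝ 1 G (Set.Ioi 0 ×ˢ (Set.univ : Set ℝ)) ∧
      ∀ p ∈ {p : ℝ × ℝ | 0 < p.1 ∧ -r p.1 < p.2 ∧ p.2 < r p.1},
        G (U p.1 p.2, deriv (U p.1) p.2) = p := by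
  exact Ctx.main (f := f) ⟨hf, hH, hU⟩
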